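/- arXiv:2602.08807 — 17 statements merged into one kernel-verified Lean document; each statement's English description precedes it below -/
import Mathlib

section
/- For every positive integer N, the set {n² : n ∈ ℕ, N ≤ n and (n : ℝ) < N + √(8N+8) + 2} is a Sidon set; that is, whenever x, y, z, t are positive integers with N ≤ x, y, z, t, each less than N + √(8N+8) + 2 (as reals), and x² + y² = z² + t², then {x, y} = {z, t}. -/
lemma sidon_key (N a b c d : ℕ) (haN : N ≤ a)
    (hbU : (b : ℝ) < N + Real.sqrt (8 * N + 8) + 2)
    (hac : a < c) (had : a < d) (heq : a ^ 2 + b ^ 2 = c ^ 2 + d ^ 2) : False := by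
  have hcb : c < b := by nlinarith
  have hdb : d < b := by nlinarith
  have hpar : (a + b) % 2 = (c + d) % 2 := by
    have h := congrArg (· % 2) heq
    rcases Nat.mod_two_eq_zero_or_one a with h1 | h1 <;>
    rcases Nat.mod_two_eq_zero_or_one b with h2 | h2 <;>
    rcases Nat.mod_two_eq_zero_or_one c with h3 | h3 <;>
    rcases Nat.mod_two_eq_zero_or_one d with h4 | h4 <;>
    simp [Nat.add_mod, Nat.pow_mod, h1, h2, h3, h4] at h ⊢
  have hs : a + b < c + d := by
    by_contra hcon
    zify at *
    have h1 : 0 < (b - a - (c - d) : ℤ) * (b - a + (c - d)) :=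
      mul_pos (by linarith) (by linarith)
    nlinarith
  have hs2 : a + b + 2 ≤ c + d := by omega
  have hbig : (8 * N + 8 : ℤ) ≤ ((b : ℤ) - a - 2) ^ 2 := by
    zify at *
    nlinarith [sq_nonneg ((c : ℤ) - d)]
  have hbigR : (8 * N + 8 : ℝ) ≤ ((b : ℝ) - a - 2) ^ 2 := by exact_mod_cast hbig
  have hge : (0 : ℝ) ≤ (b : ℝ) - a - 2 := by
    have : a + 2 ≤ b := by omega
    have : (a : ℝ) + 2 ≤ b := by exact_mod_cast this
    linarith
  have := Real.sqrt_le_iff.mpr ⟨hge, hbigR⟩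
  have : (N : ℝ) ≤ a := by exact_mod_cast haN
  linarith

/-- For every positive integer `N`, the set `{n² : N ≤ n, (n : ℝ) < N + √(8N+8) + 2}`
is a Sidon set. -/
theorem squares_sidon_in_short_interval (N : ℕ) (hN : 0 < N)
    (x y z t : ℕ) (hx : 0 < x) (hy : 0 < y) (hz : 0 < z) (ht : 0 < t)
    (hxN : N ≤ x) (hyN : N ≤ y) (hzN : N ≤ z) (htN : N ≤ t)
    (hxU : (x : ℝ) < N + Real.sqrt (8 * N + 8) + 2)
    (hyU : (y : ℝ) < N + Real.sqrt (8 * N + 8) + 2)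
    (hzU : (z : ℝ) < N + Real.sqrt (8 * N + 8) + 2)
    (htU : (t : ℝ) < N + Real.sqrt (8 * N + 8) + 2)
    (heq : x ^ 2 + y ^ 2 = z ^ 2 + t ^ 2) :
    ({x, y} : Finset ℕ) = {z, t} := by
  have hsq : ∀ u v : ℕ, u ^ 2 = v ^ 2 → u = v := fun u v h =>
    Nat.pow_left_injective (n := 2) (by norm_num) h
  by_cases h1 : x = z
  · have : y = t := hsq _ _ (by subst h1; omega)
    rw [h1, this]
  by_cases h2 : x = t
  · have : y = z := hsq _ _ (by subst h2; omega)
    rw [h2, this, Finset.pair_comm]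
  by_cases h3 : y = z
  · exact absurd (hsq x t (by subst h3; omega)) h2
  by_cases h4 : y = t
  · exact absurd (hsq x z (by subst h4; omega)) h1
  exfalso
  have hcases : (x < z ∧ x < t) ∨ (y < z ∧ y < t) ∨ (z < x ∧ z < y) ∨ (t < x ∧ t < y) := by
    omega
  rcases hcases with ⟨ha, hb⟩ | ⟨ha, hb⟩ | ⟨ha, hb⟩ | ⟨ha, hb⟩
  · exact sidon_key N x y z t hxN hyU ha hb heq
  · exact sidon_key N y x z t hyN hxU ha hb (by omega)
  · exact sidon_key N z t x y hzN htU ha hb (by omega)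
  · exact sidon_key N t z x y htN hzU ha hb (by omega)
end

section
/- There exist infinitely many positive integers N such that the set {n² : n ∈ ℕ, N ≤ n and (n : ℝ) ≤ N + √(8N+8) + 2} is not a Sidon set; that is, for infinitely many N there exist positive integers x, y, z, t with N ≤ x, y, z, t ≤ N + √(8N+8) + 2 (as reals), x² + y² = z² + t², and {x, y} ≠ {z, t}. -/
/-- There are infinitely many positive integers `N` such that the set
`{n² : N ≤ n, (n : ℝ) ≤ N + √(8N+8) + 2}` is not a Sidon set. -/
theorem squares_not_sidon_closed_interval_infinitely_often :
    ∀ N₀ : ℕ, ∃ N : ℕ, N₀ < N ∧ 0 < N ∧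
      ∃ x y z t : ℕ, 0 < x ∧ 0 < y ∧ 0 < z ∧ 0 < t ∧
        N ≤ x ∧ N ≤ y ∧ N ≤ z ∧ N ≤ t ∧
        (x : ℝ) ≤ N + Real.sqrt (8 * N + 8) + 2 ∧
        (y : ℝ) ≤ N + Real.sqrt (8 * N + 8) + 2 ∧
        (z : ℝ) ≤ N + Real.sqrt (8 * N + 8) + 2 ∧
        (t : ℝ) ≤ N + Real.sqrt (8 * N + 8) + 2 ∧
        x ^ 2 + y ^ 2 = z ^ 2 + t ^ 2 ∧
        ({x, y} : Finset ℕ) ≠ {z, t} := by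
  intro m
  have hs : Real.sqrt (8 * ((2 * m ^ 2 + 4 * m + 1 : ℕ) : ℝ) + 8) = 4 * m + 4 := by
    rw [show (8 * ((2 * m ^ 2 + 4 * m + 1 : ℕ) : ℝ) + 8) = (4 * m + 4) ^ 2 by push_cast; ring]
    exact Real.sqrt_sq (by positivity)
  have hm : (0 : ℝ) ≤ m := Nat.cast_nonneg m
  refine ⟨2 * m ^ 2 + 4 * m + 1, by nlinarith, by positivity,
    2 * m ^ 2 + 4 * m + 1, 2 * m ^ 2 + 8 * m + 7, 2 * m ^ 2 + 6 * m + 5, 2 * m ^ 2 + 6 * m + 5,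
    by positivity, by positivity, by positivity, by positivity,
    by omega, by omega, by omega, by omega, ?_, ?_, ?_, ?_, by ring, ?_⟩
  · rw [hs]; push_cast; linarith
  · rw [hs]; push_cast; linarith
  · rw [hs]; push_cast; linarith
  · rw [hs]; push_cast; linarith
  · intro h
    have h1 : 2 * m ^ 2 + 4 * m + 1 ∈
        ({2 * m ^ 2 + 6 * m + 5, 2 * m ^ 2 + 6 * m + 5} : Finset ℕ) := by
      rw [← h]; exact Finset.mem_insert_self _ _
    simp only [Finset.mem_insert, Finset.mem_singleton] at h1
    omega
end

section
/- For every positive integer N, the set {n² : n ∈ ℕ, N ≤ n and (n : ℝ) < N + √(8N) + 2} is a Sidon set. -/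
lemma sidon_core (x y z t : ℕ) (hy : 0 < y) (h1 : z < x) (h2 : y < t) (h3 : t ≤ z)
    (heq : x ^ 2 + y ^ 2 = z ^ 2 + t ^ 2) :
    (2 : ℤ) ≤ x - y ∧ (8 * y : ℤ) ≤ (x - y - 2) ^ 2 := by
  obtain ⟨a, rfl⟩ := Nat.exists_eq_add_of_lt h1
  obtain ⟨b, rfl⟩ := Nat.exists_eq_add_of_lt h2
  have e : (a + 1) * (2 * z + a + 1) = (b + 1) * (2 * y + b + 1) := by nlinarith
  obtain ⟨A, B, ⟨C, hC⟩, ⟨D, hD⟩, hAB⟩ := exists_dvd_and_dvd_of_dvd_mul (Dvd.intro _ e)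
  have hpos : 0 < A * B := by omega
  have hA : 0 < A := Nat.pos_of_mul_pos_right hpos
  have hB : 0 < B := Nat.pos_of_mul_pos_left hpos
  have hCD : 2 * z + a + 1 = C * D := by
    rw [hC, hD, hAB] at e
    apply Nat.eq_of_mul_eq_mul_left hpos
    rw [e]; ring
  have hBC : B < C := by
    have : B * D < C * D := by omega
    exact lt_of_mul_lt_mul_right this (Nat.zero_le _)
  have hD0 : 0 < D := by
    rcases Nat.eq_zero_or_pos D with h | h
    · subst h; omega
    · exact h
  have hcase : B + 2 ≤ C ∨ (C = B + 1 ∧ 2 ≤ A) := by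
    by_cases h : B + 2 ≤ C
    · exact Or.inl h
    · right
      have hc : C = B + 1 := by omega
      refine ⟨hc, ?_⟩
      by_contra hlt
      have hA1 : A = 1 := by omega
      subst hA1 hc
      have p1 : 2 * z + B = B * D + D := by
        have : (B + 1) * D = B * D + D := by ring
        omega
      have p2 : 2 * y + (B + 1) = B * D := by omega
      have hm : Even (B * D + B + D) := ⟨z + B, by omega⟩
      have hm2 : Even (B * D + B + 1) := ⟨y + B + 1, by omega⟩
      simp only [Nat.even_add, Nat.even_mul, Nat.not_even_one] at hm hm2
      tauto
  have q1 : (a : ℤ) + 1 = A * B := by exact_mod_cast hAB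
  have q2 : (b : ℤ) + 1 = A * C := by exact_mod_cast hC
  have q3 : (2 * z + a + 1 : ℤ) = C * D := by exact_mod_cast hCD
  have q4 : (2 * y + b + 1 : ℤ) = B * D := by
    have : 2 * y + b + 1 = B * D := by omega
    exact_mod_cast this
  have hy2 : (2 * y : ℤ) = B * D - A * C := by linarith
  have hd : (2 * ((z + a + 1 : ℤ) - y)) = D * (C - B) + A * (B + C) := by linarith
  push_cast
  have iA : (1 : ℤ) ≤ A := by exact_mod_cast hA
  have iB : (1 : ℤ) ≤ B := by exact_mod_cast hB
  have iD : (1 : ℤ) ≤ D := by exact_mod_cast hD0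
  generalize ((z + a + 1 : ℤ) - y) = d at hd ⊢
  rcases hcase with h | ⟨h, h'⟩
  · have iC : (B : ℤ) + 2 ≤ C := by exact_mod_cast h
    have k1 : (D : ℤ) * 2 ≤ D * (C - B) := by gcongr; linarith
    have k2 : (1 : ℤ) * (2 * B + 2) ≤ A * (B + C) := by
      apply mul_le_mul <;> linarith
    have k3 : (1 : ℤ) * (B + 2) ≤ A * C := by gcongr
    have l1 : (D : ℤ) - 1 + B ≤ d - 2 + 0 := by linarith
    have l2 : ((D : ℤ) - 1 + B) ^ 2 ≤ (d - 2) ^ 2 := by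
      apply pow_le_pow_left₀ <;> linarith
    refine ⟨by linarith, ?_⟩
    nlinarith [sq_nonneg ((D : ℤ) - 1 - B)]
  · have iC : (C : ℤ) = B + 1 := by exact_mod_cast h
    have iA2 : (2 : ℤ) ≤ A := by exact_mod_cast h'
    rw [iC] at hd hy2
    have k2 : (2 : ℤ) * (2 * B + 1) ≤ A * (B + (B + 1)) := by
      apply mul_le_mul <;> linarith
    have k3 : (2 : ℤ) * (B + 1) ≤ A * (B + 1) := by gcongr
    have l1 : (D : ℤ) - 2 + 4 * B ≤ 2 * (d - 2) := by linarith
    have l2 : ((D : ℤ) - 2 + 4 * B) ^ 2 ≤ (2 * (d - 2)) ^ 2 := by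
      apply pow_le_pow_left₀ <;> linarith
    refine ⟨by linarith, ?_⟩
    nlinarith [sq_nonneg ((D : ℤ) - 2 - 4 * B)]

lemma sidon_contra (N x y z t : ℕ) (hN : 0 < N) (hyN : N ≤ y)
    (hxU : (x : ℝ) < N + Real.sqrt (8 * N) + 2)
    (h1 : z < x) (h2 : t ≤ z)
    (heq : x ^ 2 + y ^ 2 = z ^ 2 + t ^ 2) : False := by
  have h3 : y < t := by
    by_contra h
    have : t ≤ y := by omega
    nlinarith
  obtain ⟨ha, hb⟩ := sidon_core x y z t (by omega) h1 h3 h2 heq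
  have ha' : (2 : ℝ) ≤ x - y := by exact_mod_cast ha
  have hb' : (8 * y : ℝ) ≤ (x - y - 2) ^ 2 := by exact_mod_cast hb
  have hn : (N : ℝ) ≤ y := by exact_mod_cast hyN
  have : Real.sqrt (8 * N) ≤ x - y - 2 := by
    apply Real.sqrt_le_iff.mpr
    constructor <;> linarith
  linarith

lemma sidon_ordered (N x y z t : ℕ) (hN : 0 < N)
    (hyN : N ≤ y) (htN : N ≤ t)
    (hxU : (x : ℝ) < N + Real.sqrt (8 * N) + 2)
    (hzU : (z : ℝ) < N + Real.sqrt (8 * N) + 2)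
    (hxy : y ≤ x) (hzt : t ≤ z)
    (heq : x ^ 2 + y ^ 2 = z ^ 2 + t ^ 2) : x = z ∧ y = t := by
  rcases lt_trichotomy x z with h | h | h
  · exact (sidon_contra N z t x y hN htN hzU h hxy heq.symm).elim
  · subst h
    refine ⟨rfl, ?_⟩
    have : y ^ 2 = t ^ 2 := by omega
    exact (Nat.pow_left_injective (n := 2) (by norm_num)) this
  · exact (sidon_contra N x y z t hN hyN hxU h hzt heq).elim


/-- For every positive integer `N`, the set `{n² : N ≤ n, (n : ℝ) < N + √(8N) + 2}`
is a Sidon set. -/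
theorem squares_sidon_sqrt8N (N : ℕ) (hN : 0 < N)
    (x y z t : ℕ) (hx : 0 < x) (hy : 0 < y) (hz : 0 < z) (ht : 0 < t)
    (hxN : N ≤ x) (hyN : N ≤ y) (hzN : N ≤ z) (htN : N ≤ t)
    (hxU : (x : ℝ) < N + Real.sqrt (8 * N) + 2)
    (hyU : (y : ℝ) < N + Real.sqrt (8 * N) + 2)
    (hzU : (z : ℝ) < N + Real.sqrt (8 * N) + 2)
    (htU : (t : ℝ) < N + Real.sqrt (8 * N) + 2)
    (heq : x ^ 2 + y ^ 2 = z ^ 2 + t ^ 2) :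
    ({x, y} : Finset ℕ) = {z, t} := by
  rcases le_total y x with h | h <;> rcases le_total t z with h' | h'
  · obtain ⟨rfl, rfl⟩ := sidon_ordered N x y z t hN hyN htN hxU hzU h h' heq
    rfl
  · obtain ⟨rfl, rfl⟩ := sidon_ordered N x y t z hN hyN hzN hxU htU h h' (by omega)
    exact Finset.pair_comm _ _
  · obtain ⟨rfl, rfl⟩ := sidon_ordered N y x z t hN hxN htN hyU hzU h h' (by omega)
    exact Finset.pair_comm _ _
  · obtain ⟨rfl, rfl⟩ := sidon_ordered N y x t z hN hxN hzN hyU htU h h' (by omega)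
    rfl
end

section
/- For every real ε > 0 there exist infinitely many positive integers N such that the set {n² : n ∈ ℕ, N ≤ n and (n : ℝ) < N + √(8N) + 2 + ε} is not a Sidon set; in other words, the constants √8 and 2 in the previous statement are sharp. -/
/-- For every `ε > 0` there are infinitely many positive integers `N` such that
`{n² : N ≤ n, (n : ℝ) < N + √(8N) + 2 + ε}` is not a Sidon set. -/
theorem squares_sharpness (ε : ℝ) (hε : 0 < ε) :
    ∀ N₀ : ℕ, ∃ N : ℕ, N₀ < N ∧ 0 < N ∧
      ∃ x y z t : ℕ, 0 < x ∧ 0 < y ∧ 0 < z ∧ 0 < t ∧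
        N ≤ x ∧ N ≤ y ∧ N ≤ z ∧ N ≤ t ∧
        (x : ℝ) < N + Real.sqrt (8 * N) + 2 + ε ∧
        (y : ℝ) < N + Real.sqrt (8 * N) + 2 + ε ∧
        (z : ℝ) < N + Real.sqrt (8 * N) + 2 + ε ∧
        (t : ℝ) < N + Real.sqrt (8 * N) + 2 + ε ∧
        x ^ 2 + y ^ 2 = z ^ 2 + t ^ 2 ∧
        ({x, y} : Finset ℕ) ≠ {z, t} := by
  intro N₀
  obtain ⟨δ, hδ0, hδ1, hδε⟩ : ∃ δ : ℝ, 0 < δ ∧ δ ≤ 1 ∧ δ ≤ ε :=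
    ⟨min ε 1, lt_min hε one_pos, min_le_right _ _, min_le_left _ _⟩
  obtain ⟨k, hk⟩ := exists_nat_gt (2 / δ)
  rw [div_lt_iff₀ hδ0] at hk
  obtain ⟨n, hn⟩ : ∃ n : ℕ, n = N₀ + k := ⟨_, rfl⟩
  have hnk : (k : ℝ) ≤ n := by exact_mod_cast (by omega : k ≤ n)
  have hnδ : 2 < (n : ℝ) * δ := lt_of_lt_of_le hk (by gcongr)
  have hs : 4 * ((n : ℝ) + 1) - δ < Real.sqrt (8 * ((2 * n ^ 2 + 4 * n + 1 : ℕ) : ℝ)) := by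
    apply Real.lt_sqrt_of_sq_lt
    push_cast
    nlinarith
  have hs0 := Real.sqrt_nonneg (8 * ((2 * n ^ 2 + 4 * n + 1 : ℕ) : ℝ))
  have hn0 : (0 : ℝ) ≤ n := Nat.cast_nonneg n
  obtain ⟨N, hN⟩ : ∃ N : ℕ, N = 2 * n ^ 2 + 4 * n + 1 := ⟨_, rfl⟩
  rw [← hN] at hs hs0
  refine ⟨N, by nlinarith, by omega, N, N + 4 * n + 6, N + 2 * n + 4, N + 2 * n + 4,
    by omega, by omega, by omega, by omega, by omega, by omega, by omega, by omega,
    ?_, ?_, ?_, ?_, ?_, ?_⟩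
  · linarith
  · push_cast
    linarith
  · push_cast
    linarith
  · push_cast
    linarith
  · rw [hN]
    ring
  · intro h
    have h1 : N ∈ ({N + 2 * n + 4, N + 2 * n + 4} : Finset ℕ) := by
      rw [← h]
      simp
    simp only [Finset.mem_insert, Finset.mem_singleton] at h1
    omega
end

section
/- For every real ε > 0 there exists N₀ = N₀(ε) such that for every integer N > N₀ the set {n² : n ∈ ℕ, N ≤ n and (n : ℝ) ≤ N + √((8+ε)N)} is not a Sidon set; that is, there exist positive integers x, y, z, t with N ≤ x, y, z, t ≤ N + √((8+ε)N) (as reals), x² + y² = z² + t², and {x, y} ≠ {z, t}. -/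
lemma nat_core (N : ℕ) (hN : 0 < N) : ∃ v k b f p : ℕ,
    2 * v ^ 2 ≤ N ∧ N + 1 ≤ 2 * (v + 1) ^ 2 ∧ k ^ 2 ≤ 2 * v + 1 ∧ 0 < b ∧ 0 < f ∧
    b * f = p + 1 ∧ N ≤ p ∧ p + 2 * b + f + 2 ≤ N + 4 * (v + k + 2) := by
  obtain ⟨h, hh⟩ : ∃ h, h = N / 2 := ⟨_, rfl⟩
  have h1 : 2 * h ≤ N := by omega
  have h2 : N ≤ 2 * h + 1 := by omega
  obtain ⟨v, hv⟩ : ∃ v, v = Nat.sqrt h := ⟨_, rfl⟩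
  have hv1 : v ^ 2 ≤ h := by rw [hv]; exact Nat.sqrt_le' h
  have hv2 : h < (v + 1) ^ 2 := by rw [hv]; exact Nat.lt_succ_sqrt' h
  obtain ⟨w, hw⟩ : ∃ w, (v + 1) ^ 2 = h + 1 + w := ⟨(v + 1) ^ 2 - (h + 1), by omega⟩
  obtain ⟨k, hk⟩ : ∃ k, k = Nat.sqrt w := ⟨_, rfl⟩
  have hk1 : k ^ 2 ≤ w := by rw [hk]; exact Nat.sqrt_le' w
  have hk2 : w < (k + 1) ^ 2 := by rw [hk]; exact Nat.lt_succ_sqrt' w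
  have hku : k < v + 1 := by
    by_contra hc
    have : (v + 1) ^ 2 ≤ k ^ 2 := Nat.pow_le_pow_left (by omega) 2
    omega
  obtain ⟨b, hb⟩ : ∃ b, v + 1 = k + b := ⟨v + 1 - k, by omega⟩
  have hb0 : 0 < b := by omega
  have hprod : b * (2 * (v + 1 + k)) + 2 * k ^ 2 = 2 * (v + 1) ^ 2 := by rw [hb]; ring
  have e1 : (v + 1) ^ 2 = v ^ 2 + 2 * v + 1 := by ring
  have e2 : (k + 1) ^ 2 = k ^ 2 + 2 * k + 1 := by ring
  refine ⟨v, k, b, 2 * (v + 1 + k), b * (2 * (v + 1 + k)) - 1, ?_, ?_, ?_, hb0, ?_, ?_, ?_, ?_⟩ <;>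
    omega

theorem squares_not_sidon_eps (ε : ℝ) (hε : 0 < ε) :
    ∃ N₀ : ℕ, ∀ N : ℕ, N₀ < N →
      ∃ x y z t : ℕ, 0 < x ∧ 0 < y ∧ 0 < z ∧ 0 < t ∧
        N ≤ x ∧ N ≤ y ∧ N ≤ z ∧ N ≤ t ∧
        (x : ℝ) ≤ N + Real.sqrt ((8 + ε) * N) ∧
        (y : ℝ) ≤ N + Real.sqrt ((8 + ε) * N) ∧
        (z : ℝ) ≤ N + Real.sqrt ((8 + ε) * N) ∧
        (t : ℝ) ≤ N + Real.sqrt ((8 + ε) * N) ∧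
        x ^ 2 + y ^ 2 = z ^ 2 + t ^ 2 ∧
        ({x, y} : Finset ℕ) ≠ {z, t} := by
  obtain ⟨η, hη0, hη1, hηε⟩ : ∃ η : ℝ, 0 < η ∧ η ≤ 1 ∧ 24 * η ≤ ε :=
    ⟨min 1 (ε / 24), by positivity, min_le_left _ _, by
      have := min_le_right 1 (ε / 24); linarith⟩
  obtain ⟨V, hV⟩ := exists_nat_ge (16 / η ^ 2)
  refine ⟨2 * (V + 1) ^ 2, fun N hN => ?_⟩
  obtain ⟨v, k, b, f, p, h1, h2, h3, hb, hf, hp, hNp, hx⟩ := nat_core N (by omega)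
  have hVv : V ≤ v := by
    by_contra hc
    have : (v + 1) ^ 2 ≤ (V + 1) ^ 2 := Nat.pow_le_pow_left (by omega) 2
    omega
  have hv : 16 / η ^ 2 ≤ (v : ℝ) := hV.trans (by exact_mod_cast hVv)
  have hv' : 16 ≤ (v : ℝ) * η ^ 2 := (div_le_iff₀ (by positivity)).1 hv
  have hv16 : (16 : ℝ) ≤ v * η := by nlinarith [mul_nonneg (Nat.cast_nonneg v : (0:ℝ) ≤ v) hη0.le]
  have hv1 : (16 : ℝ) ≤ v := by nlinarith [(Nat.cast_nonneg v : (0:ℝ) ≤ v)]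
  have h3' : (k : ℝ) ^ 2 ≤ 2 * v + 1 := by exact_mod_cast h3
  have hk : (k : ℝ) ≤ η * v / 2 := by
    refine (abs_le_of_sq_le_sq' ?_ (by positivity)).2
    nlinarith
  have h1' : 2 * (v : ℝ) ^ 2 ≤ N := by exact_mod_cast h1
  have key : 4 * ((v : ℝ) + k + 2) ≤ Real.sqrt ((8 + ε) * N) := by
    apply Real.le_sqrt_of_sq_le
    have a1 : 4 * ((v : ℝ) + k + 2) ≤ 4 * ((1 + η) * v) := by linarith
    have a2 : (4 * ((v : ℝ) + k + 2)) ^ 2 ≤ (4 * ((1 + η) * v)) ^ 2 := by gcongr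
    have a3 : 8 * (1 + η) ^ 2 ≤ 8 + ε := by nlinarith
    calc _ ≤ _ := a2
      _ = 8 * (1 + η) ^ 2 * (2 * (v : ℝ) ^ 2) := by ring
      _ ≤ (8 + ε) * N := by gcongr
  have bound : ∀ n : ℕ, n ≤ p + 2 * b + f + 2 → (n : ℝ) ≤ N + Real.sqrt ((8 + ε) * N) := by
    intro n hn
    have : (n : ℝ) ≤ N + 4 * ((v : ℝ) + k + 2) := by exact_mod_cast hn.trans hx
    linarith
  refine ⟨p + 2 * b + f + 2, p, p + f + 2, p + 2 * b + 2, by omega, by omega, by omega, by omega,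
    by omega, by omega, by omega, by omega, bound _ (by omega), bound _ (by omega),
    bound _ (by omega), bound _ (by omega), ?_, ?_⟩
  · zify at hp ⊢
    linear_combination 4 * hp
  · intro he
    have : p + 2 * b + f + 2 ∈ ({p + f + 2, p + 2 * b + 2} : Finset ℕ) := by rw [← he]; simp
    simp only [Finset.mem_insert, Finset.mem_singleton] at this
    omega
end

section
/- For every sufficiently large positive integer N, the equation x² + y² = z² + t² has a nontrivial solution in positive integers (i.e., one with {x, y} ≠ {z, t}) satisfying N ≤ x, y, z, t ≤ N + √(8N) + 5·N^{1/4} (as reals). -/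
/-- For every sufficiently large positive integer `N`, the equation
`x² + y² = z² + t²` has a nontrivial solution with
`N ≤ x, y, z, t ≤ N + √(8N) + 5·N^(1/4)`. -/
theorem squares_nontrivial_solution_short_interval :
    ∃ N₀ : ℕ, ∀ N : ℕ, N₀ ≤ N →
      ∃ x y z t : ℕ, 0 < x ∧ 0 < y ∧ 0 < z ∧ 0 < t ∧
        N ≤ x ∧ N ≤ y ∧ N ≤ z ∧ N ≤ t ∧
        (x : ℝ) ≤ N + Real.sqrt (8 * N) + 5 * (N : ℝ) ^ ((1 : ℝ) / 4) ∧
        (y : ℝ) ≤ N + Real.sqrt (8 * N) + 5 * (N : ℝ) ^ ((1 : ℝ) / 4) ∧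
        (z : ℝ) ≤ N + Real.sqrt (8 * N) + 5 * (N : ℝ) ^ ((1 : ℝ) / 4) ∧
        (t : ℝ) ≤ N + Real.sqrt (8 * N) + 5 * (N : ℝ) ^ ((1 : ℝ) / 4) ∧
        x ^ 2 + y ^ 2 = z ^ 2 + t ^ 2 ∧
        ({x, y} : Finset ℕ) ≠ {z, t} := by
  refine ⟨1000000, fun N hN => ?_⟩
  obtain ⟨r, hr⟩ : ∃ r, r = Nat.sqrt (N / 2) := ⟨_, rfl⟩
  have h1 : r * r ≤ N / 2 := hr ▸ Nat.sqrt_le (N / 2)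
  have h2 : N / 2 ≤ r * r + r + r := hr ▸ Nat.sqrt_le_add (N / 2)
  have h3 : r * r * 2 ≤ N := by omega
  have h4 : N ≤ 2 * (r * r) + 4 * r + 1 := by omega
  obtain ⟨m, hm⟩ : ∃ m, m = (2 * (r * r) + 4 * r + 1 - N) / 2 := ⟨_, rfl⟩
  obtain ⟨j, hj⟩ : ∃ j, j = Nat.sqrt m := ⟨_, rfl⟩
  have h5 : j * j ≤ m := hj ▸ Nat.sqrt_le m
  have h6 : m ≤ j * j + j + j := hj ▸ Nat.sqrt_le_add m
  have h7 : j * j ≤ 2 * r := by omega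
  have h8 : 2 * (j * j) + N ≤ 2 * (r * r) + 4 * r + 1 := by omega
  have h9 : 2 * (r * r) + 4 * r + 1 ≤ N + 2 * (j * j) + 4 * j + 1 := by omega
  have hjr : j < r + 1 := by
    by_contra h
    push Not at h
    nlinarith
  obtain ⟨b, hb⟩ : ∃ b, r + 1 = j + b := ⟨r + 1 - j, by omega⟩
  have hb0 : 0 < b := by omega
  have hP : 2 * b * (b + 2 * j) + 2 * (j * j) = 2 * (r * r) + 4 * r + 2 := by
    have : 2 * ((r + 1) * (r + 1)) = 2 * ((j + b) * (j + b)) := by rw [hb]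
    nlinarith
  obtain ⟨y, hy⟩ : ∃ y, 2 * b * (b + 2 * j) = y + 1 :=
    ⟨2 * b * (b + 2 * j) - 1, by omega⟩
  have hyN : N ≤ y := by omega
  have hup : y + 2 + 4 * b + 4 * j ≤ N + 4 * r + 4 * j + 7 := by omega
  have hreal : (N : ℝ) + 4 * r + 4 * j + 7 ≤
      N + Real.sqrt (8 * N) + 5 * (N : ℝ) ^ ((1 : ℝ) / 4) := by
    have hNR : (1000000 : ℝ) ≤ N := by exact_mod_cast hN
    have hs : (4 * r : ℝ) ≤ Real.sqrt (8 * N) := by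
      apply Real.le_sqrt_of_sq_le
      have : ((r * r * 2 : ℕ) : ℝ) ≤ N := by exact_mod_cast h3
      push_cast at this
      nlinarith
    obtain ⟨q, hq⟩ : ∃ q : ℝ, q = (N : ℝ) ^ ((1 : ℝ) / 4) := ⟨_, rfl⟩
    have hq0 : 0 ≤ q := hq ▸ by positivity
    have hq4 : q ^ 4 = N := by
      rw [hq, ← Real.rpow_natCast, ← Real.rpow_mul (by positivity)]
      norm_num
    have hq31 : 31 ≤ q := by
      by_contra h
      push Not at h
      have : q ^ 4 ≤ 31 ^ 4 := by gcongr
      norm_num at this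
      linarith
    have hj4 : (j : ℝ) ^ 4 ≤ 2 * q ^ 4 := by
      rw [hq4]
      have : j ^ 4 ≤ 2 * N := by
        calc j ^ 4 = (j * j) * (j * j) := by ring
          _ ≤ (2 * r) * (2 * r) := Nat.mul_le_mul h7 h7
          _ ≤ 2 * N := by nlinarith
      exact_mod_cast this
    have hjq : (j : ℝ) ≤ 1.19 * q := by
      apply le_of_pow_le_pow_left₀ (n := 4) (by norm_num) (by positivity)
      rw [mul_pow]
      have : 0 ≤ q ^ 4 := by positivity
      norm_num
      linarith
    rw [← hq]
    linarith
  have hfin : ∀ w : ℕ, w ≤ y + 2 + 4 * b + 4 * j →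
      (w : ℝ) ≤ N + Real.sqrt (8 * N) + 5 * (N : ℝ) ^ ((1 : ℝ) / 4) := by
    intro w hw
    have : (w : ℝ) ≤ ((N + 4 * r + 4 * j + 7 : ℕ) : ℝ) := by exact_mod_cast hw.trans hup
    push_cast at this
    linarith
  refine ⟨y + 2 + 4 * b + 4 * j, y, y + 2 + 2 * b + 4 * j, y + 2 + 2 * b,
    by omega, by omega, by omega, by omega, by omega, by omega, by omega, by omega,
    hfin _ (by omega), hfin _ (by omega), hfin _ (by omega), hfin _ (by omega), ?_, ?_⟩
  · nlinarith
  · intro h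
    have : y + 2 + 4 * b + 4 * j ∈ ({y + 2 + 2 * b + 4 * j, y + 2 + 2 * b} : Finset ℕ) := by
      rw [← h]; simp
    simp only [Finset.mem_insert, Finset.mem_singleton] at this
    omega
end

section
/- For every positive integer N, the set {n³ : n ∈ ℕ, N ≤ n and (n : ℝ) < N + √((38/3)·N + 1297/36) + 19/6} is a Sidon set; that is, whenever x, y, z, t are positive integers with N ≤ x, y, z, t, each less than N + √((38/3)·N + 1297/36) + 19/6 (as reals), and x³ + y³ = z³ + t³, then {x, y} = {z, t}. -/
theorem aux_six (n : ℤ) : (6 : ℤ) ∣ n ^ 3 - n := by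
  apply Int.dvd_of_emod_eq_zero
  have h : n % 6 = 0 ∨ n % 6 = 1 ∨ n % 6 = 2 ∨ n % 6 = 3 ∨ n % 6 = 4 ∨ n % 6 = 5 := by omega
  rcases h with h | h | h | h | h | h <;> simp [pow_succ, Int.sub_emod, Int.mul_emod, h]

theorem aux_core (x y z t : ℤ) (hx : 0 < x) (hxz : x < z) (hzt : z ≤ t)
    (heq : x ^ 3 + y ^ 3 = z ^ 3 + t ^ 3)
    (hb : 3 * (y - x) ^ 2 - 19 * (y - x) - 78 < 38 * x) : False := by
  have hty : t < y := by
    by_contra h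
    have h1 : y ^ 3 ≤ t ^ 3 := (Odd.strictMono_pow (by decide)).monotone (not_lt.mp h)
    have h2 : x ^ 3 < z ^ 3 := (Odd.strictMono_pow (by decide)) hxz
    linarith
  have hs : x + y < z + t := by
    by_contra h
    have h1 : z - x ≤ y - t := by linarith
    have h2 : (z - x) * (z ^ 2 + z * x + x ^ 2) = (y - t) * (y ^ 2 + y * t + t ^ 2) := by
      linear_combination -heq
    have h3 : z ^ 2 + z * x + x ^ 2 < y ^ 2 + y * t + t ^ 2 := by
      have : z ^ 2 < y ^ 2 := by nlinarith
      have : z * x ≤ y * t := by nlinarith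
      have : x ^ 2 ≤ t ^ 2 := by nlinarith
      linarith
    have h4 : 0 < z ^ 2 + z * x + x ^ 2 := by nlinarith
    nlinarith
  obtain ⟨m, hm⟩ : (6 : ℤ) ∣ (z + t) - (x + y) := by
    have h1 := aux_six x
    have h2 := aux_six y
    have h3 := aux_six z
    have h4 := aux_six t
    omega
  have hm1 : 1 ≤ m := by omega
  obtain ⟨s, hsd⟩ : ∃ s, s = x + y := ⟨_, rfl⟩
  obtain ⟨d, hdd⟩ : ∃ d, d = y - x := ⟨_, rfl⟩
  obtain ⟨e, hed⟩ : ∃ e, e = t - z := ⟨_, rfl⟩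
  obtain ⟨K, hK⟩ : ∃ K, K = d ^ 2 - e ^ 2 - 6 * m * s - 36 * m ^ 2 := ⟨_, rfl⟩
  have hs0 : 0 < s := by linarith
  have key : s * K = 6 * m * (e ^ 2 + 12 * m ^ 2) := by
    have hz : 2 * z = s + 6 * m - e := by linarith
    have ht : 2 * t = s + 6 * m + e := by linarith
    have hx2 : 2 * x = s - d := by linarith
    have hy2 : 2 * y = s + d := by linarith
    have h8 : (2 * x) ^ 3 + (2 * y) ^ 3 = (2 * z) ^ 3 + (2 * t) ^ 3 := by
      linear_combination 8 * heq
    rw [hz, ht, hx2, hy2] at h8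
    rw [hK]
    have : 6 * (s * (d ^ 2 - e ^ 2 - 6 * m * s - 36 * m ^ 2))
        = 6 * (6 * m * (e ^ 2 + 12 * m ^ 2)) := by linear_combination h8
    linarith
  have hK0 : 0 < K := by
    have : 0 < s * K := by rw [key]; positivity
    exact pos_of_mul_pos_right this hs0.le
  have hb' : 3 * d ^ 2 < 19 * s + 78 := by
    rw [← hdd] at hb
    linarith
  have hmle : m = 1 := by
    by_contra hne
    have hm2 : 2 ≤ m := by omega
    have : 2 * s ≤ m * s := by nlinarith
    nlinarith [sq_nonneg e]
  subst hmle
  have hK1 : K = 1 := by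
    by_contra hne
    have hK2 : 2 ≤ K := by omega
    have h1 : 3 * e ^ 2 + 30 + 3 * K < s := by linarith
    nlinarith [sq_nonneg e]
  subst hK1
  have hse : s = 6 * (e ^ 2 + 12) := by linarith
  have hd2 : d ^ 2 = 37 * e ^ 2 + 469 := by linarith
  have pd : d % 2 = 0 := by omega
  have pe : e % 2 = 0 := by omega
  obtain ⟨a, rfl⟩ : (2 : ℤ) ∣ d := Int.dvd_of_emod_eq_zero pd
  obtain ⟨b, rfl⟩ : (2 : ℤ) ∣ e := Int.dvd_of_emod_eq_zero pe
  ring_nf at hd2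
  omega

theorem aux_bound (N x y : ℕ) (hxN : N ≤ x)
    (hyU : (y : ℝ) < N + Real.sqrt ((38 / 3) * N + 1297 / 36) + 19 / 6) (hxy : x ≤ y) :
    3 * ((y : ℤ) - x) ^ 2 - 19 * ((y : ℤ) - x) - 78 < 38 * x := by
  have hN : (N : ℝ) ≤ x := by exact_mod_cast hxN
  have hxy' : (x : ℝ) ≤ y := by exact_mod_cast hxy
  have hx0 : (0 : ℝ) ≤ x := by positivity
  have h1 : Real.sqrt ((38 / 3) * N + 1297 / 36) ≤ Real.sqrt ((38 / 3) * x + 1297 / 36) :=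
    Real.sqrt_le_sqrt (by linarith)
  have h2 : (y : ℝ) - x - 19 / 6 < Real.sqrt ((38 / 3) * x + 1297 / 36) := by linarith
  have h3 : 3 * ((y : ℝ) - x) ^ 2 - 19 * ((y : ℝ) - x) - 78 < 38 * x := by
    by_cases h : 0 ≤ (y : ℝ) - x - 19 / 6
    · rw [Real.lt_sqrt h] at h2
      linarith
    · nlinarith
  exact_mod_cast h3

theorem aux_half (N x y z t : ℕ) (hN : 0 < N) (hxN : N ≤ x) (hxz : x ≤ z) (hxy : x ≤ y)
    (hzt : z ≤ t)
    (hyU : (y : ℝ) < N + Real.sqrt ((38 / 3) * N + 1297 / 36) + 19 / 6)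
    (heq : x ^ 3 + y ^ 3 = z ^ 3 + t ^ 3) : x = z ∧ y = t := by
  rcases hxz.eq_or_lt with h | h
  · subst h
    exact ⟨rfl, Nat.pow_left_injective (n := 3) (by norm_num) (by simpa using heq)⟩
  · exfalso
    exact aux_core x y z t (by omega) (by omega) (by omega) (by exact_mod_cast heq)
      (aux_bound N x y hxN hyU hxy)

theorem aux_ord (N x y z t : ℕ) (hN : 0 < N) (hxN : N ≤ x) (hzN : N ≤ z) (hxy : x ≤ y)
    (hzt : z ≤ t)
    (hyU : (y : ℝ) < N + Real.sqrt ((38 / 3) * N + 1297 / 36) + 19 / 6)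
    (htU : (t : ℝ) < N + Real.sqrt ((38 / 3) * N + 1297 / 36) + 19 / 6)
    (heq : x ^ 3 + y ^ 3 = z ^ 3 + t ^ 3) : x = z ∧ y = t := by
  rcases le_total x z with h | h
  · exact aux_half N x y z t hN hxN h hxy hzt hyU heq
  · have := aux_half N z t x y hN hzN h hzt hxy htU heq.symm
    exact ⟨this.1.symm, this.2.symm⟩

/-- For every positive integer `N`, the set
`{n³ : N ≤ n, (n : ℝ) < N + √((38/3)N + 1297/36) + 19/6}` is a Sidon set. -/
theorem cubes_sidon_in_short_interval (N : ℕ) (hN : 0 < N)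
    (x y z t : ℕ) (hx : 0 < x) (hy : 0 < y) (hz : 0 < z) (ht : 0 < t)
    (hxN : N ≤ x) (hyN : N ≤ y) (hzN : N ≤ z) (htN : N ≤ t)
    (hxU : (x : ℝ) < N + Real.sqrt ((38 / 3) * N + 1297 / 36) + 19 / 6)
    (hyU : (y : ℝ) < N + Real.sqrt ((38 / 3) * N + 1297 / 36) + 19 / 6)
    (hzU : (z : ℝ) < N + Real.sqrt ((38 / 3) * N + 1297 / 36) + 19 / 6)
    (htU : (t : ℝ) < N + Real.sqrt ((38 / 3) * N + 1297 / 36) + 19 / 6)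
    (heq : x ^ 3 + y ^ 3 = z ^ 3 + t ^ 3) :
    ({x, y} : Finset ℕ) = {z, t} := by
  rcases le_total x y with h | h <;> rcases le_total z t with h' | h'
  · obtain ⟨rfl, rfl⟩ := aux_ord N x y z t hN hxN hzN h h' hyU htU heq
    rfl
  · obtain ⟨rfl, rfl⟩ := aux_ord N x y t z hN hxN htN h h' hyU hzU (by omega)
    exact Finset.pair_comm _ _
  · obtain ⟨rfl, rfl⟩ := aux_ord N y x z t hN hyN hzN h h' hxU htU (by omega)
    exact Finset.pair_comm _ _
  · obtain ⟨rfl, rfl⟩ := aux_ord N y x t z hN hyN htN h h' hxU hzU (by omega)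
    rfl
end

section
/- There exist infinitely many positive integers N such that the set {n³ : n ∈ ℕ, N ≤ n and (n : ℝ) ≤ N + √((38/3)·N + 1297/36) + 19/6} is not a Sidon set; that is, for infinitely many N there exist positive integers x, y, z, t with N ≤ x, y, z, t ≤ N + √((38/3)·N + 1297/36) + 19/6 (as reals), x³ + y³ = z³ + t³, and {x, y} ≠ {z, t}. -/
/-- Solutions of the Pell-type equation `k² = 19 e² + 254` with `k = 2b+1`, `e = 2a+1`. -/
lemma pell_family (n : ℕ) :
    ∃ a b : ℕ, n ≤ a ∧ (2 * b + 1) ^ 2 = 19 * (2 * a + 1) ^ 2 + 254 := by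
  induction n with
  | zero => exact ⟨2, 13, by norm_num, by norm_num⟩
  | succ n ih =>
    obtain ⟨a, b, h1, h2⟩ := ih
    refine ⟨39 * b + 170 * a + 104, 170 * b + 741 * a + 455, by omega, ?_⟩
    zify at h2 ⊢
    linear_combination h2

/-- There are infinitely many positive integers `N` such that
`{n³ : N ≤ n, (n : ℝ) ≤ N + √((38/3)N + 1297/36) + 19/6}` is not a Sidon set. -/
theorem cubes_not_sidon_closed_interval_infinitely_often :
    ∀ N₀ : ℕ, ∃ N : ℕ, N₀ < N ∧ 0 < N ∧
      ∃ x y z t : ℕ, 0 < x ∧ 0 < y ∧ 0 < z ∧ 0 < t ∧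
        N ≤ x ∧ N ≤ y ∧ N ≤ z ∧ N ≤ t ∧
        (x : ℝ) ≤ N + Real.sqrt ((38 / 3) * N + 1297 / 36) + 19 / 6 ∧
        (y : ℝ) ≤ N + Real.sqrt ((38 / 3) * N + 1297 / 36) + 19 / 6 ∧
        (z : ℝ) ≤ N + Real.sqrt ((38 / 3) * N + 1297 / 36) + 19 / 6 ∧
        (t : ℝ) ≤ N + Real.sqrt ((38 / 3) * N + 1297 / 36) + 19 / 6 ∧
        x ^ 3 + y ^ 3 = z ^ 3 + t ^ 3 ∧
        ({x, y} : Finset ℕ) ≠ {z, t} := by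
  intro N₀
  obtain ⟨a, b, ha, hab⟩ := pell_family (N₀ + 10)
  have hb1 : b ≤ 5 * a + 2 := by
    by_contra hc
    have : 5 * a + 3 ≤ b := by omega
    nlinarith
  have hb2 : a + 3 ≤ b := by
    by_contra hc
    have : b ≤ a + 2 := by omega
    nlinarith
  obtain ⟨N, hN⟩ : ∃ N, N + b = 6 * a ^ 2 + 6 * a + 19 :=
    ⟨6 * a ^ 2 + 6 * a + 19 - b, by
      have : b ≤ 6 * a ^ 2 + 6 * a + 19 := by nlinarith
      omega⟩
  have hNlow : a < N := by nlinarith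
  have hNr : (N : ℝ) + b = 6 * a ^ 2 + 6 * a + 19 := by exact_mod_cast hN
  have habr : (2 * (b : ℝ) + 1) ^ 2 = 19 * (2 * a + 1) ^ 2 + 254 := by exact_mod_cast hab
  have hs : (2 * (b : ℝ) + 1) - 19 / 6 ≤ Real.sqrt ((38 / 3) * N + 1297 / 36) := by
    apply Real.le_sqrt_of_sq_le
    apply le_of_eq
    have : (N : ℝ) = 6 * a ^ 2 + 6 * a + 19 - b := by linarith
    rw [this]
    linear_combination habr
  have key : ∀ w : ℕ, w ≤ N + 2 * b + 1 →
      (w : ℝ) ≤ N + Real.sqrt ((38 / 3) * N + 1297 / 36) + 19 / 6 := by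
    intro w hw
    have : (w : ℝ) ≤ N + 2 * b + 1 := by exact_mod_cast hw
    linarith
  have hz : N + b + a + 4 = 6 * a ^ 2 + 7 * a + 23 := by omega
  refine ⟨N, by omega, by omega, N, N + 2 * b + 1, N + b + a + 4, N + b + 3 - a,
    by omega, by omega, by omega, by omega, by omega, by omega, by omega, by omega,
    key _ (by omega), key _ (by omega), key _ (by omega), key _ (by omega), ?_, ?_⟩
  · obtain ⟨t, ht⟩ : ∃ t, t = N + b + 3 - a := ⟨_, rfl⟩
    have ht2 : t + a = N + b + 3 := by omega
    rw [← ht]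
    zify at hN ht2 hab ⊢
    have e1 : (t : ℤ) = 6 * a ^ 2 + 5 * a + 22 := by linarith
    have e2 : (N : ℤ) = 6 * a ^ 2 + 6 * a + 19 - b := by linarith
    rw [e1, e2]
    have h4 : (b : ℤ) ^ 2 + b = 19 * a ^ 2 + 19 * a + 68 := by linarith
    linear_combination (36 * (a : ℤ) ^ 2 + 36 * a + 117) * h4
  · intro h
    have h1 : N ∈ ({N + b + a + 4, N + b + 3 - a} : Finset ℕ) := by
      rw [← h]; simp
    simp only [Finset.mem_insert, Finset.mem_singleton] at h1
    omega
end

section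
/- For every positive integer N, the set {n³ : n ∈ ℕ, N ≤ n and (n : ℝ) ≤ N + √((38/3)·N) + 19/6} is a Sidon set. -/
lemma cs_core (x y z t : ℤ) (hs : 0 < z + t)
    (heq : x ^ 3 + y ^ 3 = z ^ 3 + t ^ 3) (hlt : z + t < x + y) :
    19 * (z + t) + 78 ≤ 3 * (t - z) ^ 2 := by
  have h6 : ∀ a : ℤ, (6 : ℤ) ∣ a ^ 3 - a := by
    intro a
    apply Int.dvd_of_emod_eq_zero
    have : a % 6 = 0 ∨ a % 6 = 1 ∨ a % 6 = 2 ∨ a % 6 = 3 ∨ a % 6 = 4 ∨ a % 6 = 5 := by omega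
    rcases this with h | h | h | h | h | h <;> simp [pow_succ, Int.sub_emod, Int.mul_emod, h]
  obtain ⟨m, hm⟩ : (6 : ℤ) ∣ (x + y) - (z + t) := by
    have h1 := h6 x
    have h2 := h6 y
    have h3 := h6 z
    have h4 := h6 t
    omega
  have hm0 : 1 ≤ m := by omega
  obtain ⟨s, hsd⟩ : ∃ s, s = z + t := ⟨_, rfl⟩
  obtain ⟨d, hd⟩ : ∃ d, d = t - z := ⟨_, rfl⟩
  obtain ⟨e, he⟩ : ∃ e, e = x - y := ⟨_, rfl⟩
  have hy : x + y = s + 6 * m := by omega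
  have key : s * (d ^ 2 - e ^ 2 - 6 * m * s - 36 * m ^ 2) = 72 * m ^ 3 + 6 * m * e ^ 2 := by
    have e1 : 4 * (x ^ 3 + y ^ 3) = (s + 6 * m) * ((s + 6 * m) ^ 2 + 3 * e ^ 2) := by
      rw [← hy, he]; ring
    have e2 : 4 * (z ^ 3 + t ^ 3) = s * (s ^ 2 + 3 * d ^ 2) := by
      rw [hsd, hd]; ring
    rw [heq, e2] at e1
    linarith
  rw [← hsd, ← hd]
  rw [← hsd] at hs
  have hq : 0 < d ^ 2 - e ^ 2 - 6 * m * s - 36 * m ^ 2 := by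
    by_contra hc
    have h1 : 0 < 72 * m ^ 3 + 6 * m * e ^ 2 := by positivity
    nlinarith
  obtain ⟨q, hqd⟩ : ∃ q, q = d ^ 2 - e ^ 2 - 6 * m * s - 36 * m ^ 2 := ⟨_, rfl⟩
  rw [← hqd] at key hq
  rcases (by omega : m = 1 ∨ 2 ≤ m) with rfl | h2
  · rcases (by omega : q = 1 ∨ 2 ≤ q) with rfl | hq2
    · exfalso
      have hde : d ^ 2 = 37 * e ^ 2 + 469 := by linarith
      have hse : s = 2 * (36 + 3 * e ^ 2) := by linarith
      obtain ⟨a, ha⟩ : ∃ a, d = 2 * a := ⟨t - (36 + 3 * e ^ 2), by linarith⟩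
      obtain ⟨b, hb⟩ : ∃ b, e = 2 * b := ⟨36 + 3 * e ^ 2 + 3 - y, by linarith⟩
      rw [ha, hb] at hde
      ring_nf at hde
      omega
    · nlinarith
  · nlinarith [sq_nonneg e, mul_nonneg (sub_nonneg.2 h2) hs.le]

lemma cs_real (N z t : ℕ) (hzN : N ≤ z) (hzt : z ≤ t)
    (htU : (t : ℝ) ≤ N + Real.sqrt ((38 / 3) * N) + 19 / 6)
    (h : 19 * ((z : ℤ) + t) + 78 ≤ 3 * ((t : ℤ) - z) ^ 2) : False := by
  have h' : 19 * ((z : ℝ) + t) + 78 ≤ 3 * ((t : ℝ) - z) ^ 2 := by exact_mod_cast h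
  have h1 : (N : ℝ) ≤ z := by exact_mod_cast hzN
  have h2 : (z : ℝ) ≤ t := by exact_mod_cast hzt
  have hr := Real.sq_sqrt (show (0 : ℝ) ≤ (38 / 3) * N by positivity)
  have hr0 := Real.sqrt_nonneg ((38 / 3) * (N : ℝ))
  have hN0 : (0 : ℝ) ≤ N := Nat.cast_nonneg N
  generalize Real.sqrt ((38 / 3) * (N : ℝ)) = r at *
  obtain ⟨d, hd⟩ : ∃ d : ℝ, d = t - z := ⟨_, rfl⟩
  have ht : (t : ℝ) = z + d := by linarith
  rw [← hd, ht] at h'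
  have hdr : d - 19 / 6 ≤ r := by linarith
  have hd0 : 0 ≤ d := by linarith
  by_cases hc : 19 / 6 ≤ d
  · have := mul_self_le_mul_self (sub_nonneg.2 hc) hdr
    nlinarith
  · nlinarith

lemma cs_both (N x y z t : ℕ) (hz : 0 < z)
    (hzN : N ≤ z) (htN : N ≤ t)
    (hzU : (z : ℝ) ≤ N + Real.sqrt ((38 / 3) * N) + 19 / 6)
    (htU : (t : ℝ) ≤ N + Real.sqrt ((38 / 3) * N) + 19 / 6)
    (heq : x ^ 3 + y ^ 3 = z ^ 3 + t ^ 3) : x + y ≤ z + t := by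
  by_contra hc
  have h := cs_core x y z t (by omega) (by exact_mod_cast heq) (by omega)
  rcases le_total z t with hzt | hzt
  · exact cs_real N z t hzN hzt htU h
  · exact cs_real N t z htN hzt hzU (by linarith)

/-- For every positive integer `N`, the set
`{n³ : N ≤ n, (n : ℝ) ≤ N + √((38/3)N) + 19/6}` is a Sidon set. -/
theorem cubes_sidon_38_3 (N : ℕ) (hN : 0 < N)
    (x y z t : ℕ) (hx : 0 < x) (hy : 0 < y) (hz : 0 < z) (ht : 0 < t)
    (hxN : N ≤ x) (hyN : N ≤ y) (hzN : N ≤ z) (htN : N ≤ t)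
    (hxU : (x : ℝ) ≤ N + Real.sqrt ((38 / 3) * N) + 19 / 6)
    (hyU : (y : ℝ) ≤ N + Real.sqrt ((38 / 3) * N) + 19 / 6)
    (hzU : (z : ℝ) ≤ N + Real.sqrt ((38 / 3) * N) + 19 / 6)
    (htU : (t : ℝ) ≤ N + Real.sqrt ((38 / 3) * N) + 19 / 6)
    (heq : x ^ 3 + y ^ 3 = z ^ 3 + t ^ 3) :
    ({x, y} : Finset ℕ) = {z, t} := by
  have h1 := cs_both N x y z t hz hzN htN hzU htU heq
  have h2 := cs_both N z t x y hx hxN hyN hxU hyU heq.symm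
  have hst : (y : ℤ) = z + t - x := by omega
  have heq' : (x : ℤ) ^ 3 + y ^ 3 = z ^ 3 + t ^ 3 := by exact_mod_cast heq
  have hp : 3 * ((z : ℤ) + t) * (((x : ℤ) - z) * (x - t)) = 0 := by
    rw [hst] at heq'
    linarith
  have hne : 3 * ((z : ℤ) + t) ≠ 0 := by omega
  rcases mul_eq_zero.1 ((mul_eq_zero.1 hp).resolve_left hne) with h | h
  · have e1 : x = z := by omega
    have e2 : y = t := by omega
    rw [e1, e2]
  · have e1 : x = t := by omega
    have e2 : y = z := by omega
    rw [e1, e2, Finset.pair_comm]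
end

section
/- For every real ε > 0 there exist infinitely many positive integers N such that the set {n³ : n ∈ ℕ, N ≤ n and (n : ℝ) ≤ N + √((38/3)·N) + 19/6 + ε} is not a Sidon set; in other words, the constants 38/3 and 19/6 in the previous statement are sharp. -/
/-- Arbitrarily large solutions of the Pell-type equation. -/
lemma pell_large (B : ℕ) : ∃ a b : ℕ, B ≤ b ∧ a ^ 2 + a = 19 * b ^ 2 + 19 * b + 68 := by
  induction B with
  | zero => exact ⟨13, 2, by norm_num, by norm_num⟩
  | succ B ih =>
    obtain ⟨a, b, h1, h2⟩ := ih
    refine ⟨170 * a + 741 * b + 455, 39 * a + 170 * b + 104, by omega, ?_⟩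
    zify at h2 ⊢
    linear_combination h2

/-- For every `ε > 0` there are infinitely many positive integers `N` such that
`{n³ : N ≤ n, (n : ℝ) ≤ N + √((38/3)N) + 19/6 + ε}` is not a Sidon set. -/
theorem cubes_sharpness (ε : ℝ) (hε : 0 < ε) :
    ∀ N₀ : ℕ, ∃ N : ℕ, N₀ < N ∧ 0 < N ∧
      ∃ x y z t : ℕ, 0 < x ∧ 0 < y ∧ 0 < z ∧ 0 < t ∧
        N ≤ x ∧ N ≤ y ∧ N ≤ z ∧ N ≤ t ∧
        (x : ℝ) ≤ N + Real.sqrt ((38 / 3) * N) + 19 / 6 + ε ∧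
        (y : ℝ) ≤ N + Real.sqrt ((38 / 3) * N) + 19 / 6 + ε ∧
        (z : ℝ) ≤ N + Real.sqrt ((38 / 3) * N) + 19 / 6 + ε ∧
        (t : ℝ) ≤ N + Real.sqrt ((38 / 3) * N) + 19 / 6 + ε ∧
        x ^ 3 + y ^ 3 = z ^ 3 + t ^ 3 ∧
        ({x, y} : Finset ℕ) ≠ {z, t} := by
  intro N₀
  obtain ⟨K, hK⟩ := exists_nat_gt (19 / ε)
  obtain ⟨a, b, hb, hab⟩ := pell_large (N₀ + K ^ 2)
  have h1 : b + 3 ≤ a := by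
    by_contra h
    have : a ≤ b + 2 := by omega
    nlinarith
  have h2 : a ≤ 5 * b + 8 := by
    by_contra h
    have : 5 * b + 9 ≤ a := by omega
    nlinarith
  obtain ⟨N, hN⟩ : ∃ N, N + a = 6 * b ^ 2 + 6 * b + 19 :=
    ⟨6 * b ^ 2 + 6 * b + 19 - a, Nat.sub_add_cancel (by nlinarith)⟩
  obtain ⟨m, rfl⟩ := Nat.exists_eq_add_of_le h1
  have hNb : b < N := by nlinarith [sq_nonneg b]
  have hNK : (K : ℝ) ^ 2 ≤ N := by
    have : K ^ 2 ≤ N := by omega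
    exact_mod_cast this
  set s := Real.sqrt ((38 / 3) * N) with hs
  have hs0 : 0 ≤ s := Real.sqrt_nonneg _
  have hs2 : s ^ 2 = (38 / 3) * N := Real.sq_sqrt (by positivity)
  have hKs : (K : ℝ) ≤ s := Real.le_sqrt_of_sq_le (by nlinarith [sq_nonneg (K : ℝ)])
  have hεs : 19 ≤ ε * s := by
    rw [div_lt_iff₀ hε] at hK
    nlinarith
  have habR : ((b : ℝ) + 3 + m) ^ 2 + (b + 3 + m) = 19 * b ^ 2 + 19 * b + 68 := by
    exact_mod_cast hab
  have hNR : (N : ℝ) + (b + 3 + m) = 6 * b ^ 2 + 6 * b + 19 := by exact_mod_cast hN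
  have key : 2 * ((b : ℝ) + 3 + m) + 1 ≤ s + 19 / 6 + ε := by
    have : 2 * ((b : ℝ) + 3 + m) + 1 - 19 / 6 ≤ s + ε := by
      apply le_of_sq_le_sq _ (by positivity)
      nlinarith [sq_nonneg ε]
    linarith
  have hb0 : (0 : ℝ) ≤ b := by positivity
  have hm0 : (0 : ℝ) ≤ m := by positivity
  refine ⟨N, by nlinarith, by omega, N, N + 2 * (b + 3 + m) + 1, N + 6 + m, N + 2 * b + m + 7,
    by omega, by omega, by omega, by omega, by omega, by omega, by omega, by omega,
    by linarith, by push_cast; linarith, by push_cast; linarith, by push_cast; linarith, ?_, ?_⟩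
  · have hNZ : (N : ℤ) = 6 * b ^ 2 + 6 * b + 19 - (b + 3 + m) := by
      have : (N : ℤ) + (b + 3 + m) = 6 * b ^ 2 + 6 * b + 19 := by exact_mod_cast hN
      linarith
    zify at hab ⊢
    rw [hNZ]
    linear_combination (36 * (b:ℤ)^2 + 36 * b + 117) * hab
  · intro h
    have : N ∈ ({N + 6 + m, N + 2 * b + m + 7} : Finset ℕ) := by rw [← h]; simp
    simp only [Finset.mem_insert, Finset.mem_singleton] at this
    omega
end

section
/- There is an absolute constant c > 0 such that for every positive integer N the set {n³ : n ∈ ℕ, N ≤ n and (n : ℝ) ≤ N + c·N^{2/3}} is not a Sidon set; equivalently, the equation x³ + y³ = z³ + t³ has a nontrivial solution in positive integers (one with {x, y} ≠ {z, t}) satisfying N ≤ x, y, z, t ≤ N + c·N^{2/3} (as reals). -/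
/-- There is an absolute constant `c > 0` such that for every positive integer `N`
the equation `x³ + y³ = z³ + t³` has a nontrivial solution with
`N ≤ x, y, z, t ≤ N + c·N^(2/3)`. -/
theorem cubes_not_sidon_N_two_thirds :
    ∃ c : ℝ, 0 < c ∧ ∀ N : ℕ, 0 < N →
      ∃ x y z t : ℕ, 0 < x ∧ 0 < y ∧ 0 < z ∧ 0 < t ∧
        N ≤ x ∧ N ≤ y ∧ N ≤ z ∧ N ≤ t ∧
        (x : ℝ) ≤ N + c * (N : ℝ) ^ ((2 : ℝ) / 3) ∧
        (y : ℝ) ≤ N + c * (N : ℝ) ^ ((2 : ℝ) / 3) ∧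
        (z : ℝ) ≤ N + c * (N : ℝ) ^ ((2 : ℝ) / 3) ∧
        (t : ℝ) ≤ N + c * (N : ℝ) ^ ((2 : ℝ) / 3) ∧
        x ^ 3 + y ^ 3 = z ^ 3 + t ^ 3 ∧
        ({x, y} : Finset ℕ) ≠ {z, t} := by
  refine ⟨98, by norm_num, fun N hN => ?_⟩
  obtain ⟨m, hm1, hmN, hNm⟩ : ∃ m : ℕ, 1 ≤ m ∧ m ^ 3 ≤ N ∧ N < (m + 1) ^ 3 := by
    refine ⟨Nat.findGreatest (fun k => k ^ 3 ≤ N) N, ?_, ?_, ?_⟩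
    · exact Nat.le_findGreatest (P := fun k => k ^ 3 ≤ N) hN (by rw [one_pow]; exact hN)
    · exact Nat.findGreatest_spec (P := fun k => k ^ 3 ≤ N) (m := 0) (Nat.zero_le _) (by simp)
    · by_contra! h
      have h1 : Nat.findGreatest (fun k => k ^ 3 ≤ N) N + 1 ≤ N :=
        le_trans (Nat.le_self_pow (by norm_num) _) h
      have := Nat.le_findGreatest (P := fun k => k ^ 3 ≤ N) h1 h
      omega
  have hpow : (m : ℝ) ^ 2 ≤ (N : ℝ) ^ ((2 : ℝ) / 3) := by
    have h1 : ((m : ℝ) ^ 3) ^ ((2 : ℝ) / 3) = (m : ℝ) ^ 2 := by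
      rw [← Real.rpow_natCast (m : ℝ) 3, ← Real.rpow_mul (Nat.cast_nonneg m),
        ← Real.rpow_natCast (m : ℝ) 2]
      norm_num
    rw [← h1]
    apply Real.rpow_le_rpow (by positivity) _ (by norm_num)
    exact_mod_cast hmN
  have hm1' : (1 : ℝ) ≤ m := by exact_mod_cast hm1
  have hmN' : (m : ℝ) ^ 3 ≤ N := by exact_mod_cast hmN
  -- the solution is `e³ ± (2e² + 3)`, `e³ + 3e ± e²` with `e = m + 3`
  refine ⟨m ^ 3 + 11 * m ^ 2 + 39 * m + 48, m ^ 3 + 7 * m ^ 2 + 15 * m + 6,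
    m ^ 3 + 10 * m ^ 2 + 36 * m + 45, m ^ 3 + 8 * m ^ 2 + 24 * m + 27,
    by positivity, by positivity, by positivity, by positivity,
    by nlinarith, by nlinarith, by nlinarith, by nlinarith, ?_, ?_, ?_, ?_, by ring, ?_⟩
  · push_cast; nlinarith
  · push_cast; nlinarith
  · push_cast; nlinarith
  · push_cast; nlinarith
  · intro h
    have hx : m ^ 3 + 11 * m ^ 2 + 39 * m + 48 ∈
        ({m ^ 3 + 10 * m ^ 2 + 36 * m + 45, m ^ 3 + 8 * m ^ 2 + 24 * m + 27} : Finset ℕ) := by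
      rw [← h]; simp
    rw [Finset.mem_insert, Finset.mem_singleton] at hx
    rcases hx with hx | hx <;> nlinarith
end

section
/- For every real ε > 0 there exist infinitely many positive integers N such that the set {n³ : n ∈ ℕ, N ≤ n and (n : ℝ) ≤ N + N^{4/7 − ε}} is a Sidon set; that is, for infinitely many N, every solution of x³ + y³ = z³ + t³ in positive integers with N ≤ x, y, z, t ≤ N + N^{4/7 − ε} (as reals) satisfies {x, y} = {z, t}. -/
/-- Two solutions in the same class with comparable size coincide. -/
lemma pell_gap (A B C x1 y1 x2 y2 : ℤ) (hA : 0 < A) (hB : 0 < B) (hC : 0 < C)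
    (hx1 : 0 < x1) (hy1 : 0 < y1) (hx2 : 0 < x2) (hy2 : 0 < y2)
    (h1 : A * x1 ^ 2 = B * y1 ^ 2 + C) (h2 : A * x2 ^ 2 = B * y2 ^ 2 + C)
    (hr : y2 ^ 2 ≤ 2 * y1 ^ 2) (hd : C ∣ 2 * (x1 * y2 - x2 * y1)) (hlt : y1 < y2) : False := by
  have key : (x1 * y2 - x2 * y1) * (A * (x1 * y2 + x2 * y1)) = C * (y2 ^ 2 - y1 ^ 2) := by
    linear_combination y2 ^ 2 * h1 - y1 ^ 2 * h2
  have hP : 0 < A * (x1 * y2 + x2 * y1) := by positivity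
  have hQ : 0 < y2 ^ 2 - y1 ^ 2 := by nlinarith
  have hw : 0 < x1 * y2 - x2 * y1 := by
    have : 0 < (x1 * y2 - x2 * y1) * (A * (x1 * y2 + x2 * y1)) := by rw [key]; positivity
    exact pos_of_mul_pos_left this hP.le
  have hCw : C ≤ 2 * (x1 * y2 - x2 * y1) := Int.le_of_dvd (by linarith) hd
  have h3 : A * (x1 * y2 + x2 * y1) ≤ 2 * (y2 ^ 2 - y1 ^ 2) := by
    have : C * (A * (x1 * y2 + x2 * y1)) ≤ C * (2 * (y2 ^ 2 - y1 ^ 2)) := by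
      calc C * (A * (x1 * y2 + x2 * y1))
          ≤ (2 * (x1 * y2 - x2 * y1)) * (A * (x1 * y2 + x2 * y1)) :=
            mul_le_mul_of_nonneg_right hCw hP.le
        _ = C * (2 * (y2 ^ 2 - y1 ^ 2)) := by linear_combination 2 * key
    exact le_of_mul_le_mul_left this hC
  have big : ∀ x y : ℤ, 0 < x → 0 < y → A * x ^ 2 = B * y ^ 2 + C → y < A * x := by
    intro x y hx hy h
    have hAB : 1 ≤ A * B := by nlinarith
    have : y ^ 2 < (A * x) ^ 2 := by
      have e : (A * x) ^ 2 = (A * B) * y ^ 2 + A * C := by linear_combination A * h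
      have : 0 < A * C := by positivity
      nlinarith [sq_nonneg y]
    exact lt_of_pow_lt_pow_left₀ 2 (by positivity) this
  have b1 := big x1 y1 hx1 hy1 h1
  have b2 := big x2 y2 hx2 hy2 h2
  nlinarith

lemma pell_cop (A B C x y : ℕ) (hAC : A.Coprime C) (hxy : x.Coprime y)
    (h : A * x ^ 2 = B * y ^ 2 + C) : y.Coprime C := by
  by_contra hn
  obtain ⟨p, hp, hpy, hpC⟩ := Nat.Prime.not_coprime_iff_dvd.mp hn
  have h1 : p ∣ A * x ^ 2 := by
    rw [h]; exact dvd_add (Dvd.dvd.mul_left (dvd_pow hpy two_ne_zero) _) hpC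
  rcases (hp.dvd_mul).mp h1 with h2 | h2
  · exact Nat.Prime.not_coprime_iff_dvd.mpr ⟨p, hp, h2, hpC⟩ hAC
  · exact Nat.Prime.not_coprime_iff_dvd.mpr ⟨p, hp, hp.dvd_of_dvd_pow h2, hpy⟩ hxy

lemma pell_cop' (A B C x y : ℕ) (hBC : B.Coprime C) (hxy : x.Coprime y)
    (h : A * x ^ 2 = B * y ^ 2 + C) : x.Coprime C := by
  by_contra hn
  obtain ⟨p, hp, hpy, hpC⟩ := Nat.Prime.not_coprime_iff_dvd.mp hn
  have h1 : p ∣ B * y ^ 2 := by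
    have : p ∣ B * y ^ 2 + C := by
      rw [← h]; exact (Dvd.dvd.mul_left (dvd_pow hpy two_ne_zero) _)
    exact (Nat.dvd_add_left hpC).mp this
  rcases (hp.dvd_mul).mp h1 with h2 | h2
  · exact Nat.Prime.not_coprime_iff_dvd.mpr ⟨p, hp, h2, hpC⟩ hBC
  · exact Nat.Prime.not_coprime_iff_dvd.mpr ⟨p, hp, hpy, hp.dvd_of_dvd_pow h2⟩ hxy

/-- Solutions with the same fingerprint are in the same class. -/
lemma pell_class (A B C x0 y0 x1 y1 x2 y2 : ℤ) (u : ℤ) 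
    (hAC : IsCoprime A C) 
    (c0 : IsCoprime y0 C) (c0' : IsCoprime x0 C) (c1 : IsCoprime y1 C)
    (h0 : A * x0 ^ 2 = B * y0 ^ 2 + C)
    (h1 : A * x1 ^ 2 = B * y1 ^ 2 + C) (h2 : A * x2 ^ 2 = B * y2 ^ 2 + C)
    (hu1 : (Int.gcd C (x1 * y0 - x0 * y1) : ℤ) = u)
    (hu2 : (Int.gcd C (x2 * y0 - x0 * y2) : ℤ) = u) (hC : 0 < C) :
    C ∣ 2 * (x1 * y2 - x2 * y1) := by
  have huC : u ∣ C := by rw [← hu1]; exact Int.gcd_dvd_left ..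
  have hu0 : u ≠ 0 := by rintro rfl; simp at huC; omega
  obtain ⟨v, hv⟩ := huC
  have hvC : v ∣ C := ⟨u, by rw [hv]; ring⟩
  have huC : u ∣ C := ⟨v, hv⟩
  have a1 : u ∣ x1 * y0 - x0 * y1 := by rw [← hu1]; exact Int.gcd_dvd_right ..
  have a2 : u ∣ x2 * y0 - x0 * y2 := by rw [← hu2]; exact Int.gcd_dvd_right ..
  have plus : ∀ x y : ℤ, A * x ^ 2 = B * y ^ 2 + C →
      (Int.gcd C (x * y0 - x0 * y) : ℤ) = u → v ∣ x * y0 + x0 * y := by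
    intro x y h hu
    have d1 : C ∣ (x * y0 - x0 * y) * (x * y0 + x0 * y) := by
      have : C ∣ A * ((x * y0 - x0 * y) * (x * y0 + x0 * y)) :=
        ⟨y0 ^ 2 - y ^ 2, by linear_combination y0 ^ 2 * h - y ^ 2 * h0⟩
      exact hAC.symm.dvd_of_dvd_mul_left this
    have au : u ∣ x * y0 - x0 * y := by rw [← hu]; exact Int.gcd_dvd_right ..
    obtain ⟨w, hw⟩ := au
    have hvw : IsCoprime v w := by
      have hg := Int.gcd_eq_gcd_ab C (x * y0 - x0 * y)
      rw [hu] at hg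
      refine ⟨Int.gcdA C (x * y0 - x0 * y), Int.gcdB C (x * y0 - x0 * y), ?_⟩
      apply mul_left_cancel₀ hu0
      generalize Int.gcdA C (x * y0 - x0 * y) = α at *
      generalize Int.gcdB C (x * y0 - x0 * y) = β at *
      linear_combination -hg - α * hv - β * hw
    have : u * v ∣ u * (w * (x * y0 + x0 * y)) := by
      rw [← hv, ← mul_assoc, ← hw]; exact d1
    exact hvw.dvd_of_dvd_mul_left ((mul_dvd_mul_iff_left hu0).mp this)
  have b1 := plus x1 y1 h1 hu1
  have b2 := plus x2 y2 h2 hu2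
  have hu : u ∣ x1 * y2 - x2 * y1 := by
    have : u ∣ y0 * (x1 * y2 - x2 * y1) := by
      have e : y0 * (x1 * y2 - x2 * y1) = (x1 * y0 - x0 * y1) * y2 - (x2 * y0 - x0 * y2) * y1 := by
        ring
      rw [e]; exact dvd_sub (a1.mul_right _) (a2.mul_right _)
    exact (c0.symm.of_isCoprime_of_dvd_left huC).dvd_of_dvd_mul_left this
  have hvd : v ∣ x1 * y2 - x2 * y1 := by
    have : v ∣ y0 * (x1 * y2 - x2 * y1) := by
      have e : y0 * (x1 * y2 - x2 * y1) = (x1 * y0 + x0 * y1) * y2 - (x2 * y0 + x0 * y2) * y1 := by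
        ring
      rw [e]; exact dvd_sub (b1.mul_right _) (b2.mul_right _)
    exact (c0.symm.of_isCoprime_of_dvd_left hvC).dvd_of_dvd_mul_left this
  -- the gcd of u and v divides 2
  have hg2 : (Int.gcd u v : ℤ) ∣ 2 := by
    have gu : (Int.gcd u v : ℤ) ∣ u := Int.gcd_dvd_left ..
    have gv : (Int.gcd u v : ℤ) ∣ v := Int.gcd_dvd_right ..
    have gC := gu.trans huC
    have : (Int.gcd u v : ℤ) ∣ (x0 * y1) * 2 := by
      have e : (x0 * y1) * 2 = (x1 * y0 + x0 * y1) - (x1 * y0 - x0 * y1) := by ring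
      rw [e]; exact dvd_sub (gv.trans b1) (gu.trans a1)
    have cc : IsCoprime (x0 * y1) C := c0'.mul_left c1
    exact (cc.symm.of_isCoprime_of_dvd_left gC).dvd_of_dvd_mul_left this
  obtain ⟨p, hp⟩ := hu
  obtain ⟨q, hq⟩ := hvd
  have hgab := Int.gcd_eq_gcd_ab u v
  obtain ⟨r, hr⟩ := hg2
  rw [hgab] at hr
  generalize Int.gcdA u v = α at *
  generalize Int.gcdB u v = β at *
  refine ⟨r * (α * q + β * p), ?_⟩
  rw [hv]
  linear_combination (x1 * y2 - x2 * y1) * hr + r * u * α * hq + r * v * β * hp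

lemma pell_prim (A B C : ℕ) (hA : 0 < A) (hB : 0 < B) (hC : 0 < C)
    (hAC : A.Coprime C) (hBC : B.Coprime C) (S : Finset (ℕ × ℕ))
    (hS : ∀ q ∈ S, 0 < q.1 ∧ 0 < q.2 ∧ A * q.1 ^ 2 = B * q.2 ^ 2 + C)
    (hr : ∀ q ∈ S, ∀ r ∈ S, r.2 ^ 2 ≤ 2 * q.2 ^ 2)
    (hp : ∀ q ∈ S, q.1.Coprime q.2) : S.card ≤ C.divisors.card := by
  rcases S.eq_empty_or_nonempty with rfl | ⟨q0, hq0⟩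
  · simp
  obtain ⟨p0, pp0, e0⟩ := hS q0 hq0
  apply Finset.card_le_card_of_injOn
    (fun q => Int.gcd (C : ℤ) ((q.1 : ℤ) * q0.2 - q0.1 * q.2))
  · intro q hq
    simp only [Finset.mem_coe, Nat.mem_divisors]
    refine ⟨?_, hC.ne'⟩
    have : ((Int.gcd (C : ℤ) ((q.1 : ℤ) * q0.2 - q0.1 * q.2) : ℕ) : ℤ) ∣ (C : ℤ) :=
      Int.gcd_dvd_left ..
    exact_mod_cast this
  · have main : ∀ q ∈ S, ∀ r ∈ S,
        Int.gcd (C : ℤ) ((q.1 : ℤ) * q0.2 - q0.1 * q.2) =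
        Int.gcd (C : ℤ) ((r.1 : ℤ) * q0.2 - q0.1 * r.2) → r.2 ≤ q.2 := by
      intro q hq r hr' h
      by_contra hlt
      push Not at hlt
      obtain ⟨p1, pp1, e1⟩ := hS q hq
      obtain ⟨p2, pp2, e2⟩ := hS r hr'
      have hdv := pell_class A B C q0.1 q0.2 q.1 q.2 r.1 r.2
        (Int.gcd (C : ℤ) ((q.1 : ℤ) * q0.2 - q0.1 * q.2) : ℕ)
        (Nat.isCoprime_iff_coprime.mpr hAC)
        (Nat.isCoprime_iff_coprime.mpr (pell_cop A B C _ _ hAC (hp q0 hq0) e0))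
        (Nat.isCoprime_iff_coprime.mpr (pell_cop' A B C _ _ hBC (hp q0 hq0) e0))
        (Nat.isCoprime_iff_coprime.mpr (pell_cop A B C _ _ hAC (hp q hq) e1))
        (by exact_mod_cast e0) (by exact_mod_cast e1) (by exact_mod_cast e2)
        rfl (by rw [h]) (by exact_mod_cast hC)
      exact pell_gap A B C q.1 q.2 r.1 r.2 (by exact_mod_cast hA) (by exact_mod_cast hB)
        (by exact_mod_cast hC) (by exact_mod_cast p1) (by exact_mod_cast pp1)
        (by exact_mod_cast p2) (by exact_mod_cast pp2)
        (by exact_mod_cast e1) (by exact_mod_cast e2) (by exact_mod_cast hr q hq r hr')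
        hdv (by exact_mod_cast hlt)
    intro q hq r hr' h
    have hy : q.2 = r.2 := le_antisymm (main r hr' q hq h.symm) (main q hq r hr' h)
    obtain ⟨p1, pp1, e1⟩ := hS q hq
    obtain ⟨p2, pp2, e2⟩ := hS r hr'
    have : A * q.1 ^ 2 = A * r.1 ^ 2 := by rw [e1, e2, hy]
    have h3 := Nat.eq_of_mul_eq_mul_left hA this
    exact Prod.ext (Nat.pow_left_injective (n := 2) (by norm_num) h3) hy

lemma div_card_mono {a b : ℕ} (h : a ∣ b) (hb : 0 < b) : a.divisors.card ≤ b.divisors.card :=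
  Finset.card_le_card (Nat.divisors_subset_of_dvd hb.ne' h)

lemma pell_copcount (A B C : ℕ) (hA : 0 < A) (hB : 0 < B) (hC : 0 < C)
    (hAC : A.Coprime C) (hBC : B.Coprime C) (S : Finset (ℕ × ℕ))
    (hS : ∀ q ∈ S, 0 < q.1 ∧ 0 < q.2 ∧ A * q.1 ^ 2 = B * q.2 ^ 2 + C)
    (hr : ∀ q ∈ S, ∀ r ∈ S, r.2 ^ 2 ≤ 2 * q.2 ^ 2) : S.card ≤ C.divisors.card ^ 2 := by
  have hsq : ∀ q ∈ S, (q.1.gcd q.2) ^ 2 ∣ C := by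
    intro q hq
    obtain ⟨_, _, e⟩ := hS q hq
    have h1 : (q.1.gcd q.2) ^ 2 ∣ B * q.2 ^ 2 + C := by
      rw [← e]; exact Dvd.dvd.mul_left (pow_dvd_pow_of_dvd (Nat.gcd_dvd_left _ _) 2) _
    exact (Nat.dvd_add_right
      (Dvd.dvd.mul_left (pow_dvd_pow_of_dvd (Nat.gcd_dvd_right _ _) 2) _)).mp h1
  rw [pow_two]
  apply Finset.card_le_mul_card_image_of_maps_to (f := fun q : ℕ × ℕ => q.1.gcd q.2)
  · intro q hq
    simp only [Nat.mem_divisors]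
    exact ⟨(dvd_pow_self _ two_ne_zero).trans (hsq q hq), hC.ne'⟩
  intro e he
  have he0 : 0 < e := Nat.pos_of_mem_divisors he
  set F := S.filter (fun q : ℕ × ℕ => q.1.gcd q.2 = e) with hF
  rcases F.eq_empty_or_nonempty with h | ⟨q0, hq0⟩
  · rw [h]; simp
  have hFm : ∀ q ∈ F, q ∈ S ∧ q.1.gcd q.2 = e := by
    intro q hq; simpa [hF] using hq
  have he2 : e ^ 2 ∣ C := by
    obtain ⟨h1, h2⟩ := hFm q0 hq0
    rw [← h2]; exact hsq q0 h1
  obtain ⟨C', hC'⟩ := he2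
  have hC'0 : 0 < C' := by
    rcases Nat.eq_zero_or_pos C' with h | h
    · subst h; simp at hC'; omega
    · exact h
  have hdC : C' ∣ C := ⟨e ^ 2, by rw [hC']; ring⟩
  have hdiv : ∀ q ∈ F, ∃ a b : ℕ, q.1 = e * a ∧ q.2 = e * b ∧ a.Coprime b := by
    intro q hq
    obtain ⟨h1, h2⟩ := hFm q hq
    obtain ⟨a, ha⟩ : e ∣ q.1 := by rw [← h2]; exact Nat.gcd_dvd_left _ _
    obtain ⟨b, hb⟩ : e ∣ q.2 := by rw [← h2]; exact Nat.gcd_dvd_right _ _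
    refine ⟨a, b, ha, hb, ?_⟩
    rw [ha, hb, Nat.gcd_mul_left] at h2
    exact Nat.eq_of_mul_eq_mul_left he0 (by rw [h2, mul_one])
  have hinj : Set.InjOn (fun q : ℕ × ℕ => (q.1 / e, q.2 / e)) F := by
    intro q hq r hr' h
    obtain ⟨a, b, ha, hb, _⟩ := hdiv q hq
    obtain ⟨c, d, hc, hd, _⟩ := hdiv r hr'
    simp only [Prod.mk.injEq] at h
    rw [ha, hb, hc, hd] at h
    simp only [Nat.mul_div_cancel_left _ he0] at h
    exact Prod.ext (by rw [ha, hc, h.1]) (by rw [hb, hd, h.2])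
  rw [← Finset.card_image_of_injOn hinj]
  refine le_trans ?_ (div_card_mono hdC hC)
  apply pell_prim A B C' hA hB hC'0 (hAC.coprime_dvd_right hdC) (hBC.coprime_dvd_right hdC)
  · intro q hq
    obtain ⟨r, hr', rfl⟩ := Finset.mem_image.mp hq
    obtain ⟨a, b, ha, hb, _⟩ := hdiv r hr'
    obtain ⟨p1, p2, e1⟩ := hS r (hFm r hr').1
    simp only [ha, hb, Nat.mul_div_cancel_left _ he0] at *
    refine ⟨Nat.pos_of_mul_pos_left p1, Nat.pos_of_mul_pos_left p2, ?_⟩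
    have : e ^ 2 * (A * a ^ 2) = e ^ 2 * (B * b ^ 2 + C') := by
      rw [mul_add, ← hC']; linarith
    exact Nat.eq_of_mul_eq_mul_left (by positivity) this
  · intro q hq q' hq'
    obtain ⟨r, hr', rfl⟩ := Finset.mem_image.mp hq
    obtain ⟨a, b, ha, hb, _⟩ := hdiv r hr'
    obtain ⟨r2, hr2, rfl⟩ := Finset.mem_image.mp hq'
    obtain ⟨c, d, hc, hd, _⟩ := hdiv r2 hr2
    have := hr r (hFm r hr').1 r2 (hFm r2 hr2).1
    simp only [hb, hd, Nat.mul_div_cancel_left _ he0] at *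
    have : e ^ 2 * (d ^ 2) ≤ e ^ 2 * (2 * b ^ 2) := by linarith
    exact Nat.le_of_mul_le_mul_left this (by positivity)
  · intro q hq
    obtain ⟨r, hr', rfl⟩ := Finset.mem_image.mp hq
    obtain ⟨a, b, ha, hb, hab⟩ := hdiv r hr'
    simpa only [ha, hb, Nat.mul_div_cancel_left _ he0] using hab

lemma pell_count : ∀ C : ℕ, 0 < C → ∀ A B : ℕ, 0 < A → 0 < B → ∀ S : Finset (ℕ × ℕ),
    (∀ q ∈ S, 0 < q.1 ∧ 0 < q.2 ∧ A * q.1 ^ 2 = B * q.2 ^ 2 + C) →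
    (∀ q ∈ S, ∀ r ∈ S, r.2 ^ 2 ≤ 2 * q.2 ^ 2) → S.card ≤ C.divisors.card ^ 2 := by
  intro C
  induction C using Nat.strong_induction_on with
  | _ C ih =>
  intro hC A B hA hB S hS hr
  by_cases hAC : A.Coprime C
  · by_cases hBC : B.Coprime C
    · exact pell_copcount A B C hA hB hC hAC hBC S hS hr
    · obtain ⟨p, hp, ⟨B', rfl⟩, ⟨C', rfl⟩⟩ := Nat.Prime.not_coprime_iff_dvd.mp hBC
      have hp0 := hp.pos
      have hC' : 0 < C' := Nat.pos_of_mul_pos_left hC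
      have hpA : ¬ p ∣ A := fun h =>
        Nat.Prime.not_coprime_iff_dvd.mpr ⟨p, hp, h, Dvd.intro _ rfl⟩ hAC
      have hx : ∀ q ∈ S, ∃ a, q.1 = p * a := by
        intro q hq
        obtain ⟨_, _, e⟩ := hS q hq
        have : p ∣ A * q.1 ^ 2 := by
          rw [e, mul_assoc, ← mul_add]; exact Dvd.intro _ rfl
        exact hp.dvd_of_dvd_pow ((hp.dvd_mul.mp this).resolve_left hpA)
      have hinj : Set.InjOn (fun q : ℕ × ℕ => (q.1 / p, q.2)) S := by
        intro q hq r hr' h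
        obtain ⟨a, ha⟩ := hx q hq
        obtain ⟨c, hc⟩ := hx r hr'
        simp only [Prod.mk.injEq] at h
        rw [ha, hc] at h
        simp only [Nat.mul_div_cancel_left _ hp0] at h
        exact Prod.ext (by rw [ha, hc, h.1]) h.2
      rw [← Finset.card_image_of_injOn hinj]
      refine le_trans ?_ (Nat.pow_le_pow_left (div_card_mono (Dvd.intro_left p rfl) hC) 2)
      refine ih C' (by nlinarith [hp.two_le]) hC' (A * p) B' (by positivity)
        (Nat.pos_of_mul_pos_left hB) _ ?_ ?_
      · intro q hq
        obtain ⟨r, hr', rfl⟩ := Finset.mem_image.mp hq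
        obtain ⟨a, ha⟩ := hx r hr'
        obtain ⟨p1, p2, e1⟩ := hS r hr'
        simp only [ha, Nat.mul_div_cancel_left _ hp0] at *
        refine ⟨Nat.pos_of_mul_pos_left p1, p2, ?_⟩
        apply Nat.eq_of_mul_eq_mul_left hp0
        linarith
      · intro q hq q' hq'
        obtain ⟨r, hr', rfl⟩ := Finset.mem_image.mp hq
        obtain ⟨r2, hr2, rfl⟩ := Finset.mem_image.mp hq'
        exact hr r hr' r2 hr2
  · obtain ⟨p, hp, ⟨A', rfl⟩, ⟨C', rfl⟩⟩ := Nat.Prime.not_coprime_iff_dvd.mp hAC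
    have hp0 := hp.pos
    have hC' : 0 < C' := Nat.pos_of_mul_pos_left hC
    by_cases hpB : p ∣ B
    · obtain ⟨B', rfl⟩ := hpB
      refine le_trans ?_ (Nat.pow_le_pow_left (div_card_mono (Dvd.intro_left p rfl) hC) 2)
      refine ih C' (by nlinarith [hp.two_le]) hC' A' B' (Nat.pos_of_mul_pos_left hA)
        (Nat.pos_of_mul_pos_left hB) S ?_ hr
      intro q hq
      obtain ⟨p1, p2, e1⟩ := hS q hq
      refine ⟨p1, p2, ?_⟩
      apply Nat.eq_of_mul_eq_mul_left hp0
      linarith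
    · have hx : ∀ q ∈ S, ∃ a, q.2 = p * a := by
        intro q hq
        obtain ⟨_, _, e⟩ := hS q hq
        have : p ∣ B * q.2 ^ 2 := by
          have h1 : p ∣ B * q.2 ^ 2 + p * C' := by
            rw [← e, mul_assoc]; exact Dvd.intro _ rfl
          exact (Nat.dvd_add_left (Dvd.intro _ rfl)).mp h1
        exact hp.dvd_of_dvd_pow ((hp.dvd_mul.mp this).resolve_left hpB)
      have hinj : Set.InjOn (fun q : ℕ × ℕ => (q.1, q.2 / p)) S := by
        intro q hq r hr' h
        obtain ⟨a, ha⟩ := hx q hq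
        obtain ⟨c, hc⟩ := hx r hr'
        simp only [Prod.mk.injEq] at h
        rw [ha, hc] at h
        simp only [Nat.mul_div_cancel_left _ hp0] at h
        exact Prod.ext h.1 (by rw [ha, hc, h.2])
      rw [← Finset.card_image_of_injOn hinj]
      refine le_trans ?_ (Nat.pow_le_pow_left (div_card_mono (Dvd.intro_left p rfl) hC) 2)
      refine ih C' (by nlinarith [hp.two_le]) hC' A' (B * p) (Nat.pos_of_mul_pos_left hA)
        (by positivity) _ ?_ ?_
      · intro q hq
        obtain ⟨r, hr', rfl⟩ := Finset.mem_image.mp hq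
        obtain ⟨a, ha⟩ := hx r hr'
        obtain ⟨p1, p2, e1⟩ := hS r hr'
        simp only [ha, Nat.mul_div_cancel_left _ hp0] at *
        refine ⟨p1, Nat.pos_of_mul_pos_left p2, ?_⟩
        apply Nat.eq_of_mul_eq_mul_left hp0
        linarith
      · intro q hq q' hq'
        obtain ⟨r, hr', rfl⟩ := Finset.mem_image.mp hq
        obtain ⟨a, ha⟩ := hx r hr'
        obtain ⟨r2, hr2, rfl⟩ := Finset.mem_image.mp hq'
        obtain ⟨c, hc⟩ := hx r2 hr2
        have := hr r hr' r2 hr2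
        simp only [ha, hc, Nat.mul_div_cancel_left _ hp0] at *
        have : p ^ 2 * (c ^ 2) ≤ p ^ 2 * (2 * a ^ 2) := by linarith
        exact Nat.le_of_mul_le_mul_left this (by positivity)

lemma divisor_bound (δ : ℝ) (hδ : 0 < δ) :
    ∃ K : ℝ, 0 < K ∧ ∀ n : ℕ, 0 < n → (n.divisors.card : ℝ) ≤ K * (n : ℝ) ^ δ := by
  obtain ⟨P, hP⟩ := exists_nat_gt ((2 : ℝ) ^ (1 / δ))
  set c : ℝ := max 1 (1 / (δ * Real.log 2)) with hc
  have hl : 0 < Real.log 2 := Real.log_pos (by norm_num)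
  have hc1 : 1 ≤ c := le_max_left _ _
  have hc2 : 1 ≤ c * (δ * Real.log 2) := by
    have : 1 / (δ * Real.log 2) ≤ c := le_max_right _ _
    rwa [div_le_iff₀ (by positivity)] at this
  refine ⟨c ^ P, by positivity, ?_⟩
  intro n hn
  have hsmall : ∀ p a : ℕ, 2 ≤ p → ((a : ℝ) + 1) ≤ c * ((p : ℝ) ^ a) ^ δ := by
    intro p a hp
    have h2 : (2 : ℝ) ≤ p := by exact_mod_cast hp
    have h1 : ((2 : ℝ) ^ a) ^ δ ≤ ((p : ℝ) ^ a) ^ δ := by gcongr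
    have h3 : 1 + a * (δ * Real.log 2) ≤ ((2 : ℝ) ^ a) ^ δ := by
      rw [Real.rpow_def_of_pos (by positivity), Real.log_pow]
      have := Real.add_one_le_exp ((a : ℝ) * Real.log 2 * δ)
      linarith
    have ha : (0 : ℝ) ≤ a := Nat.cast_nonneg a
    calc (a : ℝ) + 1 ≤ c * (1 + a * (δ * Real.log 2)) := by nlinarith
      _ ≤ c * ((p : ℝ) ^ a) ^ δ := by gcongr; linarith
  have hlarge : ∀ p a : ℕ, P ≤ p → ((a : ℝ) + 1) ≤ ((p : ℝ) ^ a) ^ δ := by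
    intro p a hp
    have h1 : (2 : ℝ) ^ (1 / δ) ≤ p := hP.le.trans (by exact_mod_cast hp)
    have h2 : (2 : ℝ) ≤ (p : ℝ) ^ δ := by
      calc (2 : ℝ) = ((2 : ℝ) ^ (1 / δ)) ^ δ := by
            rw [← Real.rpow_mul (by norm_num)]; field_simp; simp
        _ ≤ (p : ℝ) ^ δ := by gcongr
    have h3 : ((p : ℝ) ^ a) ^ δ = ((p : ℝ) ^ δ) ^ a := by
      rw [← Real.rpow_natCast, ← Real.rpow_mul (by positivity), mul_comm,
        Real.rpow_mul (by positivity), Real.rpow_natCast]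
    rw [h3]
    calc (a : ℝ) + 1 ≤ 2 ^ a := by exact_mod_cast Nat.lt_two_pow_self
      _ ≤ _ := by gcongr
  rw [Nat.card_divisors hn.ne']
  push_cast
  have hn' : (n : ℝ) ^ δ = ∏ p ∈ n.primeFactors, ((p : ℝ) ^ (n.factorization p)) ^ δ := by
    rw [Real.finsetProd_rpow _ _ (fun i _ => by positivity)]
    congr 1
    have := Nat.prod_factorization_pow_eq_self hn.ne'
    conv_lhs => rw [← this]
    rw [Finsupp.prod, Nat.support_factorization]
    push_cast; rfl
  calc ∏ p ∈ n.primeFactors, ((n.factorization p : ℝ) + 1)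
      ≤ ∏ p ∈ n.primeFactors, ((if p < P then c else 1) *
          ((p : ℝ) ^ (n.factorization p)) ^ δ) := by
        apply Finset.prod_le_prod
        · intro i _; positivity
        · intro p hp
          split_ifs with h
          · exact hsmall p _ (Nat.prime_of_mem_primeFactors hp).two_le
          · rw [one_mul]; exact hlarge p _ (not_lt.mp h)
    _ = (∏ p ∈ n.primeFactors, (if p < P then c else 1)) * (n : ℝ) ^ δ := by
        rw [Finset.prod_mul_distrib, hn']
    _ ≤ c ^ P * (n : ℝ) ^ δ := by
        gcongr
        rw [← Finset.prod_filter, Finset.prod_const]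
        apply pow_le_pow_right₀ hc1
        calc _ ≤ (Finset.range P).card := by
              apply Finset.card_le_card
              intro p hp
              simp at hp ⊢
              exact hp.2
          _ = P := Finset.card_range P

set_option maxHeartbeats 1000000 in
/-- Parameters attached to a nontrivial solution. -/
lemma extract_lt (L h N x y z t : ℕ) (hL : 0 < L) (hN : 4 * L ≤ N)
    (hh : h ^ 6 ≤ 4608 * L ^ 4)
    (hx : N ≤ x) (hy : N ≤ y) (hx' : x ≤ N + h) (hy' : y ≤ N + h)
    (e : x ^ 3 + y ^ 3 = z ^ 3 + t ^ 3) (hlt : x + y < z + t) :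
    ∃ j m a b o : ℕ, 0 < j ∧ 0 < m ∧ 0 < a ∧ 0 < b ∧ o ≤ 2 * h ∧
      (2 * N + o) * m = 9 * j ^ 3 + 3 * j * b ^ 2 ∧
      m * a ^ 2 = (m + 9 * j ^ 2) * b ^ 2 + (27 * j ^ 4 + 9 * m * j ^ 2 + m ^ 2) ∧
      24 * L * j ≤ h ^ 2 ∧ 64 * L ^ 2 * m ≤ h ^ 4 ∧ 9 * j ^ 3 ≤ 3 * L := by
  have eZ : (x : ℤ) ^ 3 + (y : ℤ) ^ 3 = (z : ℤ) ^ 3 + (t : ℤ) ^ 3 := by exact_mod_cast e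
  obtain ⟨k, hk⟩ : ∃ k : ℤ, k = (z : ℤ) + t - (x + y) := ⟨_, rfl⟩
  obtain ⟨s, hs⟩ : ∃ s : ℤ, s = (x : ℤ) + y := ⟨_, rfl⟩
  obtain ⟨d, hd⟩ : ∃ d : ℤ, d = (x : ℤ) - y := ⟨_, rfl⟩
  obtain ⟨f, hf⟩ : ∃ f : ℤ, f = (z : ℤ) - t := ⟨_, rfl⟩
  obtain ⟨m, hm⟩ : ∃ m : ℤ, m = d ^ 2 - f ^ 2 - s * k - k ^ 2 := ⟨_, rfl⟩
  have hk0 : 0 < k := by omega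
  have hs0 : 8 * (L : ℤ) ≤ s := by omega
  have hLZ : 0 < (L : ℤ) := by omega
  have hspos : 0 < s := by omega
  have e1 : s ^ 3 + 3 * s * d ^ 2 = (s + k) ^ 3 + 3 * (s + k) * f ^ 2 := by
    have : s + k = (z : ℤ) + t := by omega
    rw [this, hs, hd, hf]
    linear_combination 4 * eZ
  have e2 : 3 * (s * m) = k ^ 3 + 3 * k * f ^ 2 := by
    rw [hm]; linear_combination e1
  have h3k : (3 : ℤ) ∣ k := by
    have : (3 : ℤ) ∣ k ^ 3 := ⟨s * m - k * f ^ 2, by linear_combination -e2⟩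
    exact Int.prime_three.dvd_of_dvd_pow this
  obtain ⟨j, rfl⟩ := h3k
  have hj0 : 0 < j := by omega
  have e3 : s * m = 9 * j ^ 3 + 3 * j * f ^ 2 := by linarith
  have hm0 : 0 < m := by
    have : 0 < s * m := by rw [e3]; positivity
    exact pos_of_mul_pos_right this hspos.le
  have hdh : d ^ 2 ≤ (h : ℤ) ^ 2 := by
    apply sq_le_sq'
    · omega
    · omega
  have e4 : d ^ 2 = f ^ 2 + 3 * s * j + 9 * j ^ 2 + m := by linarith
  have c1 : 24 * (L : ℤ) * j ≤ (h : ℤ) ^ 2 := by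
    nlinarith [sq_nonneg f, sq_nonneg j]
  have c2 : 64 * (L : ℤ) ^ 2 * m ≤ (h : ℤ) ^ 4 := by
    have a1 : s * m ≤ 3 * j * (h : ℤ) ^ 2 := by
      have : 3 * j ^ 2 + f ^ 2 ≤ (h : ℤ) ^ 2 := by
        have : 0 < 3 * s * j := by positivity
        nlinarith [sq_nonneg j]
      rw [e3]
      have := mul_le_mul_of_nonneg_left this (by positivity : 0 ≤ 3 * j)
      linarith
    have a2 : 8 * (L : ℤ) * m ≤ 3 * j * (h : ℤ) ^ 2 :=
      (mul_le_mul_of_nonneg_right hs0 hm0.le).trans a1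
    calc 64 * (L : ℤ) ^ 2 * m = 8 * L * (8 * L * m) := by ring
      _ ≤ 8 * L * (3 * j * (h : ℤ) ^ 2) := mul_le_mul_of_nonneg_left a2 (by positivity)
      _ = (24 * L * j) * (h : ℤ) ^ 2 := by ring
      _ ≤ (h : ℤ) ^ 2 * (h : ℤ) ^ 2 := mul_le_mul_of_nonneg_right c1 (by positivity)
      _ = (h : ℤ) ^ 4 := by ring
  have c3 : 9 * j ^ 3 ≤ 3 * (L : ℤ) := by
    have a1 : (24 * (L : ℤ) * j) ^ 3 ≤ ((h : ℤ) ^ 2) ^ 3 := by gcongr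
    have a2 : (h : ℤ) ^ 6 ≤ 4608 * (L : ℤ) ^ 4 := by exact_mod_cast hh
    have a3 : (4608 * (L : ℤ) ^ 3) * (3 * j ^ 3) ≤ (4608 * (L : ℤ) ^ 3) * L := by nlinarith
    have := le_of_mul_le_mul_left a3 (by positivity)
    linarith
  have hf0 : f ≠ 0 := by
    rintro rfl
    have : s ≤ s * m := le_mul_of_one_le_right hspos.le (by omega)
    rw [e3] at this
    norm_num at this
    linarith
  have hd0 : d ≠ 0 := by
    rintro rfl
    have : 0 < 3 * s * j := by positivity
    nlinarith [sq_nonneg f, sq_nonneg j]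
  lift j to ℕ using hj0.le
  lift m to ℕ using hm0.le
  refine ⟨j, m, d.natAbs, f.natAbs, x + y - 2 * N, by exact_mod_cast hj0, by exact_mod_cast hm0,
    Int.natAbs_pos.mpr hd0, Int.natAbs_pos.mpr hf0, by omega, ?_, ?_, by exact_mod_cast c1,
    by exact_mod_cast c2, by exact_mod_cast c3⟩
  · have : 2 * N + (x + y - 2 * N) = x + y := by omega
    rw [this]
    zify
    rw [sq_abs, ← hs]
    exact e3
  · zify
    rw [sq_abs, sq_abs]
    linear_combination (m : ℤ) * e4 + 3 * j * e3

lemma extract (L h N x y z t : ℕ) (hL : 0 < L) (hN : 4 * L ≤ N)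
    (hh : h ^ 6 ≤ 4608 * L ^ 4)
    (hx : N ≤ x) (hy : N ≤ y) (hz : N ≤ z) (ht : N ≤ t)
    (hx' : x ≤ N + h) (hy' : y ≤ N + h) (hz' : z ≤ N + h) (ht' : t ≤ N + h)
    (e : x ^ 3 + y ^ 3 = z ^ 3 + t ^ 3) (hne : ({x, y} : Finset ℕ) ≠ {z, t}) :
    ∃ j m a b o : ℕ, 0 < j ∧ 0 < m ∧ 0 < a ∧ 0 < b ∧ o ≤ 2 * h ∧
      (2 * N + o) * m = 9 * j ^ 3 + 3 * j * b ^ 2 ∧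
      m * a ^ 2 = (m + 9 * j ^ 2) * b ^ 2 + (27 * j ^ 4 + 9 * m * j ^ 2 + m ^ 2) ∧
      24 * L * j ≤ h ^ 2 ∧ 64 * L ^ 2 * m ≤ h ^ 4 ∧ 9 * j ^ 3 ≤ 3 * L := by
  rcases lt_trichotomy (x + y) (z + t) with h1 | h1 | h1
  · exact extract_lt L h N x y z t hL hN hh hx hy hx' hy' e h1
  · exfalso
    apply hne
    have eZ : (x : ℤ) ^ 3 + (y : ℤ) ^ 3 = (z : ℤ) ^ 3 + (t : ℤ) ^ 3 := by exact_mod_cast e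
    have hZ : (t : ℤ) = x + y - z := by omega
    have hp : (0 : ℤ) < 3 * (x + y) := by omega
    rw [hZ] at eZ
    have : 3 * ((x : ℤ) + y) * ((x - z) * (y - z)) = 0 := by linear_combination -eZ
    rcases mul_eq_zero.mp ((mul_eq_zero.mp this).resolve_left hp.ne') with h2 | h2
    · have hxz : x = z := by omega
      have hyt : y = t := by omega
      rw [hxz, hyt]
    · have hxz : y = z := by omega
      have hyt : x = t := by omega
      rw [hxz, hyt, Finset.pair_comm]
  · exact extract_lt L h N z t x y hL hN hh hz ht hz' ht' e.symm h1

set_option maxHeartbeats 1000000 in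
lemma core (L h D : ℕ) (hL : 0 < L) (hh : h ^ 6 ≤ 4608 * L ^ 4) (hhL : 2 * h ≤ 3 * L)
    (hD : ∀ n : ℕ, 0 < n → n ≤ 10000 * L ^ 4 → n.divisors.card ≤ D)
    (hbad : ∀ N : ℕ, 4 * L ≤ N → N < 5 * L → ∃ x y z t : ℕ, N ≤ x ∧ N ≤ y ∧ N ≤ z ∧ N ≤ t ∧
      x ≤ N + h ∧ y ≤ N + h ∧ z ≤ N + h ∧ t ≤ N + h ∧ x ^ 3 + y ^ 3 = z ^ 3 + t ^ 3 ∧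
      ({x, y} : Finset ℕ) ≠ {z, t}) :
    512 * L ^ 4 ≤ h ^ 7 * D ^ 2 := by
  have hex : ∀ N : ℕ, ∃ j m a b o : ℕ, 4 * L ≤ N → N < 5 * L →
      (0 < j ∧ 0 < m ∧ 0 < a ∧ 0 < b ∧ o ≤ 2 * h ∧
      (2 * N + o) * m = 9 * j ^ 3 + 3 * j * b ^ 2 ∧
      m * a ^ 2 = (m + 9 * j ^ 2) * b ^ 2 + (27 * j ^ 4 + 9 * m * j ^ 2 + m ^ 2) ∧
      24 * L * j ≤ h ^ 2 ∧ 64 * L ^ 2 * m ≤ h ^ 4 ∧ 9 * j ^ 3 ≤ 3 * L) := by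
    intro N
    by_cases h1 : 4 * L ≤ N ∧ N < 5 * L
    · obtain ⟨x, y, z, t, q1, q2, q3, q4, q5, q6, q7, q8, q9, q10⟩ := hbad N h1.1 h1.2
      obtain ⟨j, m, a, b, o, H⟩ := extract L h N x y z t hL h1.1 hh q1 q2 q3 q4 q5 q6 q7 q8 q9 q10
      exact ⟨j, m, a, b, o, fun _ _ => H⟩
    · exact ⟨0, 0, 0, 0, 0, fun h2 h3 => absurd ⟨h2, h3⟩ h1⟩
  choose j m a b o H using hex
  set T := Finset.Ico (4 * L) (5 * L) with hT
  have HT : ∀ N ∈ T, 0 < j N ∧ 0 < m N ∧ 0 < a N ∧ 0 < b N ∧ o N ≤ 2 * h ∧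
      (2 * N + o N) * m N = 9 * j N ^ 3 + 3 * j N * b N ^ 2 ∧
      m N * a N ^ 2 = (m N + 9 * j N ^ 2) * b N ^ 2 +
        (27 * j N ^ 4 + 9 * m N * j N ^ 2 + m N ^ 2) ∧
      24 * L * j N ≤ h ^ 2 ∧ 64 * L ^ 2 * m N ≤ h ^ 4 ∧ 9 * j N ^ 3 ≤ 3 * L := by
    intro N hN
    rw [hT, Finset.mem_Ico] at hN
    exact H N hN.1 hN.2
  have hcard : T.card = L := by rw [hT, Nat.card_Ico]; omega
  -- there is a bad N, so h is positive
  have hh0 : 0 < h := by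
    have h4 : 4 * L ∈ T := by rw [hT, Finset.mem_Ico]; omega
    obtain ⟨q1, _, _, _, _, _, _, q8, _⟩ := HT _ h4
    rcases Nat.eq_zero_or_pos h with rfl | hp
    · exfalso
      have : 0 < 24 * L * j (4 * L) := by positivity
      omega
    · exact hp
  have hcount : T.card ≤ (D ^ 2 * (2 * h + 1)) *
      (Finset.Icc 1 (h ^ 2 / (24 * L)) ×ˢ Finset.Icc 1 (h ^ 4 / (64 * L ^ 2))).card := by
    apply Finset.card_le_mul_card_image_of_maps_to (f := fun N => (j N, m N))
    · intro N hN
      obtain ⟨q1, q2, _, _, _, _, _, q8, q9, _⟩ := HT N hN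
      simp only [Finset.mem_product, Finset.mem_Icc]
      refine ⟨⟨q1, ?_⟩, q2, ?_⟩
      · rw [Nat.le_div_iff_mul_le (by positivity)]; linarith
      · rw [Nat.le_div_iff_mul_le (by positivity)]; linarith
    · rintro ⟨j0, m0⟩ -
      set F := T.filter (fun N => (j N, m N) = (j0, m0)) with hF
      have hFm : ∀ N ∈ F, 4 * L ≤ N ∧ N < 5 * L ∧ 0 < j0 ∧ 0 < m0 ∧ 0 < a N ∧ 0 < b N ∧
          o N ≤ 2 * h ∧
          (2 * N + o N) * m0 = 9 * j0 ^ 3 + 3 * j0 * b N ^ 2 ∧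
          m0 * a N ^ 2 = (m0 + 9 * j0 ^ 2) * b N ^ 2 +
            (27 * j0 ^ 4 + 9 * m0 * j0 ^ 2 + m0 ^ 2) ∧
          24 * L * j0 ≤ h ^ 2 ∧ 64 * L ^ 2 * m0 ≤ h ^ 4 ∧ 9 * j0 ^ 3 ≤ 3 * L := by
        intro N hN
        rw [hF, Finset.mem_filter] at hN
        obtain ⟨h1, h2⟩ := hN
        have h3 := HT N h1
        rw [hT, Finset.mem_Ico] at h1
        simp only [Prod.mk.injEq] at h2
        rw [h2.1, h2.2] at h3
        exact ⟨h1.1, h1.2, h3⟩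
      rcases F.eq_empty_or_nonempty with hemp | ⟨N0, hN0⟩
      · rw [hemp]; simp
      obtain ⟨_, _, j0p, m0p, _, _, _, _, _, r1, r2, r3⟩ := hFm N0 hN0
      set C := 27 * j0 ^ 4 + 9 * m0 * j0 ^ 2 + m0 ^ 2 with hCdef
      have hC0 : 0 < C := by positivity
      have hCD : C.divisors.card ≤ D := by
        apply hD C hC0
        have hj : j0 ≤ L := by
          have h2 := Nat.pow_le_pow_left hhL 2
          have : (24 * L) * j0 ≤ (24 * L) * L := by nlinarith
          exact Nat.le_of_mul_le_mul_left this (by positivity)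
        have hm : m0 ≤ L ^ 2 := by
          have h4 := Nat.pow_le_pow_left hhL 4
          have : (64 * L ^ 2) * m0 ≤ (64 * L ^ 2) * L ^ 2 := by nlinarith
          exact Nat.le_of_mul_le_mul_left this (by positivity)
        calc C ≤ 27 * L ^ 4 + 9 * L ^ 2 * L ^ 2 + (L ^ 2) ^ 2 := by
              rw [hCdef]; gcongr
          _ ≤ 10000 * L ^ 4 := by nlinarith [Nat.zero_le (L ^ 4)]
      set S := F.image (fun N => (a N, b N)) with hS
      have hScard : S.card ≤ D ^ 2 := by
        refine le_trans ?_ (Nat.pow_le_pow_left hCD 2)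
        apply pell_count C hC0 m0 (m0 + 9 * j0 ^ 2) m0p (by positivity)
        · intro q hq
          obtain ⟨N, hN, rfl⟩ := Finset.mem_image.mp hq
          obtain ⟨_, _, _, _, s1, s2, _, _, s3, _⟩ := hFm N hN
          exact ⟨s1, s2, s3⟩
        · intro q hq r hr
          obtain ⟨N, hN, rfl⟩ := Finset.mem_image.mp hq
          obtain ⟨N', hN', rfl⟩ := Finset.mem_image.mp hr
          obtain ⟨t1, t2, _, _, s1, s2, s3, s4, _⟩ := hFm N hN
          obtain ⟨t1', t2', _, _, s1', s2', s3', s4', _⟩ := hFm N' hN'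
          have k1 : (2 * N' + o N') + 3 * L ≤ 2 * (2 * N + o N) := by omega
          have k2 := Nat.mul_le_mul_right m0 k1
          have k3 : 3 * L ≤ 3 * L * m0 := Nat.le_mul_of_pos_right _ m0p
          have : (3 * j0) * b N' ^ 2 ≤ (3 * j0) * (2 * b N ^ 2) := by
            rw [add_mul, mul_assoc 2 (2 * N + o N) m0, s4, s4'] at k2
            linarith
          exact Nat.le_of_mul_le_mul_left this (by positivity)
      calc F.card ≤ (S ×ˢ Finset.range (2 * h + 1)).card := by
            apply Finset.card_le_card_of_injOn (fun N => ((a N, b N), o N))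
            · intro N hN
              simp only [Finset.coe_product, Set.mem_prod, Finset.mem_coe, Finset.mem_range]
              refine ⟨Finset.mem_image_of_mem _ hN, ?_⟩
              obtain ⟨_, _, _, _, s1, s2, s3, _⟩ := hFm N hN
              omega
            · intro N hN N' hN' heq
              simp only [Prod.mk.injEq] at heq
              obtain ⟨_, _, _, _, _, _, _, s4, _⟩ := hFm N hN
              obtain ⟨_, _, _, _, _, _, _, s4', _⟩ := hFm N' hN'
              rw [heq.1.2, heq.2, ← s4'] at s4
              have := Nat.eq_of_mul_eq_mul_right m0p s4
              omega
        _ = S.card * (2 * h + 1) := by rw [Finset.card_product, Finset.card_range]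
        _ ≤ D ^ 2 * (2 * h + 1) := Nat.mul_le_mul_right _ hScard
  rw [hcard, Finset.card_product, Nat.card_Icc, Nat.card_Icc] at hcount
  simp only [Nat.add_sub_cancel] at hcount
  have d1 : (24 * L) * (h ^ 2 / (24 * L)) ≤ h ^ 2 := Nat.mul_div_le _ _
  have d2 : (64 * L ^ 2) * (h ^ 4 / (64 * L ^ 2)) ≤ h ^ 4 := Nat.mul_div_le _ _
  generalize h ^ 2 / (24 * L) = u at *
  generalize h ^ 4 / (64 * L ^ 2) = v at *
  have d3 : 3 * (512 * L ^ 4) ≤ 3 * (h ^ 7 * D ^ 2) := by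
    calc 3 * (512 * L ^ 4) = (24 * L * (64 * L ^ 2)) * L := by ring
      _ ≤ (24 * L * (64 * L ^ 2)) * (D ^ 2 * (2 * h + 1) * (u * v)) := by gcongr
      _ = ((24 * L) * u) * ((64 * L ^ 2) * v) * (D ^ 2 * (2 * h + 1)) := by ring
      _ ≤ h ^ 2 * h ^ 4 * (D ^ 2 * (3 * h)) := by gcongr; omega
      _ = 3 * (h ^ 7 * D ^ 2) := by ring
  omega
/-- For every `ε > 0` there are infinitely many positive integers `N` such that
`{n³ : N ≤ n, (n : ℝ) ≤ N + N^(4/7 - ε)}` is a Sidon set. -/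
theorem cubes_sidon_N_four_sevenths (ε : ℝ) (hε : 0 < ε) :
    ∀ N₀ : ℕ, ∃ N : ℕ, N₀ < N ∧ 0 < N ∧
      ∀ x y z t : ℕ, 0 < x → 0 < y → 0 < z → 0 < t →
        N ≤ x → N ≤ y → N ≤ z → N ≤ t →
        (x : ℝ) ≤ N + (N : ℝ) ^ ((4 : ℝ) / 7 - ε) →
        (y : ℝ) ≤ N + (N : ℝ) ^ ((4 : ℝ) / 7 - ε) →
        (z : ℝ) ≤ N + (N : ℝ) ^ ((4 : ℝ) / 7 - ε) →
        (t : ℝ) ≤ N + (N : ℝ) ^ ((4 : ℝ) / 7 - ε) →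
        x ^ 3 + y ^ 3 = z ^ 3 + t ^ 3 →
        ({x, y} : Finset ℕ) = {z, t} := by
  intro N₀
  by_contra hcon
  push Not at hcon
  set η : ℝ := min ε (1 / 7) with hη
  have hη0 : 0 < η := lt_min hε (by norm_num)
  have hη1 : η ≤ ε := min_le_left _ _
  have hη2 : η ≤ 1 / 7 := min_le_right _ _
  obtain ⟨K, hK, hdiv⟩ := divisor_bound (η / 8) (by positivity)
  set c : ℝ := 625 * (K * 10000 ^ (η / 8)) ^ 2 with hc
  have htend : Filter.Tendsto (fun n : ℕ => (n : ℝ) ^ (6 * η)) Filter.atTop Filter.atTop :=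
    (tendsto_rpow_atTop (by positivity)).comp tendsto_natCast_atTop_atTop
  obtain ⟨L, hL1, hL2⟩ := ((htend.eventually_gt_atTop c).and
    (Filter.eventually_ge_atTop (N₀ + 10))).exists
  have hLpos : (0 : ℝ) < L := by exact_mod_cast (by omega : 0 < L)
  have hL1' : (1 : ℝ) ≤ L := by exact_mod_cast (by omega : 1 ≤ L)
  set h : ℕ := ⌊((5 * L : ℕ) : ℝ) ^ ((4 : ℝ) / 7 - η)⌋₊ with hh
  set D : ℕ := ⌊K * ((10000 * L ^ 4 : ℕ) : ℝ) ^ (η / 8)⌋₊ with hD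
  have hhle : (h : ℝ) ≤ ((5 * L : ℕ) : ℝ) ^ ((4 : ℝ) / 7 - η) := Nat.floor_le (by positivity)
  have hDle : (D : ℝ) ≤ K * ((10000 * L ^ 4 : ℕ) : ℝ) ^ (η / 8) := Nat.floor_le (by positivity)
  have h7 : (h : ℝ) ^ 7 ≤ 625 * (L : ℝ) ^ (4 - 7 * η) := by
    calc (h : ℝ) ^ 7 ≤ (((5 * L : ℕ) : ℝ) ^ ((4 : ℝ) / 7 - η)) ^ 7 := by gcongr
      _ = ((5 : ℝ) * L) ^ (4 - 7 * η) := by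
          rw [← Real.rpow_natCast, ← Real.rpow_mul (by positivity)]
          push_cast; congr 1; ring
      _ = (5 : ℝ) ^ (4 - 7 * η) * (L : ℝ) ^ (4 - 7 * η) :=
          Real.mul_rpow (by norm_num) (by positivity)
      _ ≤ (5 : ℝ) ^ (4 : ℝ) * (L : ℝ) ^ (4 - 7 * η) := by
          gcongr
          · norm_num
          · linarith
      _ = 625 * (L : ℝ) ^ (4 - 7 * η) := by
          congr 1
          rw [show (4 : ℝ) = ((4 : ℕ) : ℝ) by norm_num, Real.rpow_natCast]; norm_num
  have h7' : h ^ 7 ≤ 625 * L ^ 4 := by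
    have : (L : ℝ) ^ (4 - 7 * η) ≤ (L : ℝ) ^ (4 : ℝ) :=
      Real.rpow_le_rpow_of_exponent_le hL1' (by linarith)
    rw [show (4 : ℝ) = ((4 : ℕ) : ℝ) by norm_num, Real.rpow_natCast] at this
    have h3 : (h : ℝ) ^ 7 ≤ 625 * (L : ℝ) ^ 4 := by
      push_cast at this
      linarith
    exact_mod_cast h3
  have h6 : h ^ 6 ≤ 4608 * L ^ 4 := by
    rcases Nat.eq_zero_or_pos h with h0 | h0
    · rw [h0]; positivity
    · have : h ^ 6 ≤ h ^ 7 := Nat.pow_le_pow_right h0 (by norm_num)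
      linarith [Nat.zero_le (L ^ 4)]
  have hhL : 2 * h ≤ 3 * L := by
    by_contra hlt
    push Not at hlt
    have h1 : L < h := by omega
    have h2 : L ^ 7 < h ^ 7 := Nat.pow_lt_pow_left h1 (by norm_num)
    have h3 : 10 ^ 3 ≤ L ^ 3 := Nat.pow_le_pow_left (by omega) 3
    have h4 : 10 ^ 3 * L ^ 4 ≤ L ^ 3 * L ^ 4 := Nat.mul_le_mul_right _ h3
    have h5 : L ^ 3 * L ^ 4 = L ^ 7 := by ring
    omega
  have hmain := core L h D (by omega) h6 hhL ?_ ?_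
  · have hm : (512 : ℝ) * (L : ℝ) ^ 4 ≤ (h : ℝ) ^ 7 * (D : ℝ) ^ 2 := by exact_mod_cast hmain
    have hD2 : (D : ℝ) ^ 2 ≤ (K * 10000 ^ (η / 8)) ^ 2 * (L : ℝ) ^ η := by
      calc (D : ℝ) ^ 2 ≤ (K * ((10000 * L ^ 4 : ℕ) : ℝ) ^ (η / 8)) ^ 2 := by gcongr
        _ = (K * 10000 ^ (η / 8)) ^ 2 * (L : ℝ) ^ η := by
          push_cast
          rw [Real.mul_rpow (by norm_num) (by positivity), ← mul_assoc, mul_pow _ _ 2]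
          congr 1
          rw [← Real.rpow_natCast, ← Real.rpow_natCast, ← Real.rpow_mul (by positivity),
            ← Real.rpow_mul (by positivity)]
          congr 1
          push_cast; ring
    have hfin : (512 : ℝ) * (L : ℝ) ^ 4 ≤ c * ((L : ℝ) ^ (4 - 7 * η) * (L : ℝ) ^ η) := by
      calc (512 : ℝ) * (L : ℝ) ^ 4 ≤ (h : ℝ) ^ 7 * (D : ℝ) ^ 2 := hm
        _ ≤ (625 * (L : ℝ) ^ (4 - 7 * η)) * ((K * 10000 ^ (η / 8)) ^ 2 * (L : ℝ) ^ η) := by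
          gcongr
        _ = _ := by rw [hc]; ring
    rw [← Real.rpow_add hLpos] at hfin
    have hsplit : (L : ℝ) ^ 4 = (L : ℝ) ^ (4 - 7 * η + η) * (L : ℝ) ^ (6 * η) := by
      rw [← Real.rpow_add hLpos, ← Real.rpow_natCast]
      congr 1; push_cast; ring
    have hp : 0 < (L : ℝ) ^ (4 - 7 * η + η) := by positivity
    have hq : 0 < (L : ℝ) ^ (6 * η) := by positivity
    rw [hsplit] at hfin
    nlinarith [mul_lt_mul_of_pos_left hL1 hp, mul_pos hp hq]
  · intro n hn hnle
    rw [hD]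
    apply Nat.le_floor
    refine (hdiv n hn).trans ?_
    gcongr
  · intro N hN1 hN2
    obtain ⟨x, y, z, t, -, -, -, -, q1, q2, q3, q4, r1, r2, r3, r4, e, ne⟩ :=
      hcon N (by omega) (by omega)
    have hle : (N : ℝ) ^ ((4 : ℝ) / 7 - ε) ≤ ((5 * L : ℕ) : ℝ) ^ ((4 : ℝ) / 7 - η) := by
      have hN : (1 : ℝ) ≤ N := by exact_mod_cast (by omega : 1 ≤ N)
      calc (N : ℝ) ^ ((4 : ℝ) / 7 - ε) ≤ (N : ℝ) ^ ((4 : ℝ) / 7 - η) :=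
            Real.rpow_le_rpow_of_exponent_le hN (by linarith)
        _ ≤ _ := by
            apply Real.rpow_le_rpow (by positivity) (by exact_mod_cast hN2.le) (by linarith)
    have fl : ∀ w : ℕ, N ≤ w → (w : ℝ) ≤ N + (N : ℝ) ^ ((4 : ℝ) / 7 - ε) → w ≤ N + h := by
      intro w hw hw'
      have : w - N ≤ h := by
        rw [hh]
        apply Nat.le_floor
        rw [Nat.cast_sub hw]
        linarith
      omega
    exact ⟨x, y, z, t, q1, q2, q3, q4, fl x q1 r1, fl y q2 r2, fl z q3 r3, fl t q4 r4, e, ne⟩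
end

section
/- There is an absolute constant c > 0 such that for every positive integer N the set {n⁴ : n ∈ ℕ, N ≤ n and (n : ℝ) ≤ N + c·N^{3/5}} is a Sidon set; that is, every solution of x⁴ + y⁴ = z⁴ + t⁴ in positive integers with N ≤ x, y, z, t ≤ N + c·N^{3/5} (as reals) satisfies {x, y} = {z, t}. -/
/-- Core estimate: a descent through integers `k, R, W, V`. -/
lemma quartic_core (m k P Q : ℤ) (hm : 0 < m) (hk : 0 < k) (hQ : 0 ≤ Q) (hPQ : P ≤ Q)
    (h : 4 * m * k * (2 * (m ^ 2 + k ^ 2) + 3 * Q) = (6 * (m ^ 2 + k ^ 2) + Q) * P) :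
    m ^ 6 ≤ 720 * Q ^ 5 := by
  obtain ⟨A, hA⟩ : ∃ A, A = m ^ 2 + k ^ 2 := ⟨_, rfl⟩
  rw [← hA] at h
  have hApos : 0 < A := by rw [hA]; positivity
  have hmk : 0 < m * k := by positivity
  have hP : 0 < P := by
    have h1 : 0 < (6 * A + Q) * P := by rw [← h]; positivity
    exact pos_of_mul_pos_right h1 (by positivity)
  have hQ' : 0 < Q := by linarith
  rcases le_or_gt (m ^ 2) Q with hc | hc
  · have h1 : (m ^ 2) ^ 5 ≤ Q ^ 5 := by gcongr
    have h2 : m ^ 6 ≤ m ^ 10 := pow_le_pow_right₀ (by linarith) (by norm_num)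
    have h3 : (m ^ 2) ^ 5 = m ^ 10 := by ring
    have h4 : 0 < Q ^ 5 := by positivity
    linarith
  have hQA : Q ≤ A := by rw [hA]; nlinarith
  have hmkQ : m * k ≤ Q := by
    have h1 : (6 * A + Q) * P ≤ (7 * A) * Q := by gcongr; linarith
    have h2 : 0 < m * k * Q := by positivity
    have h3 : A * (8 * (m * k)) ≤ A * (7 * Q) := by linarith
    have h4 := le_of_mul_le_mul_left h3 hApos
    linarith
  obtain ⟨R, hR⟩ : ∃ R, R = 3 * P - 4 * m * k := ⟨_, rfl⟩
  have hR1 : R * (6 * A + Q) = 32 * m * k * Q := by rw [hR]; linear_combination (-3) * h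
  have hRpos : 0 < R := by
    have h1 : 0 < R * (6 * A + Q) := by rw [hR1]; positivity
    exact pos_of_mul_pos_left h1 (by positivity)
  have hRQ : 0 < R * Q := by positivity
  have hRm : m ^ 2 * R ≤ 6 * Q ^ 2 := by
    have h1 : 0 < R * k ^ 2 := by positivity
    have h2 : R * m ^ 2 * 6 ≤ 32 * (m * k) * Q := by rw [hA] at hR1; linarith
    have h3 : (m * k) * Q ≤ Q * Q := by gcongr
    nlinarith
  obtain ⟨W, hW⟩ : ∃ W, W = 16 * k * Q - 3 * R * m := ⟨_, rfl⟩
  have hW1 : 2 * m * W = R * (6 * k ^ 2 + Q) := by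
    rw [hA] at hR1; rw [hW]; linear_combination (-1) * hR1
  have hWpos : 0 < W := by
    have h1 : 0 < 2 * m * W := by rw [hW1]; positivity
    exact pos_of_mul_pos_right h1 (by positivity)
  have hkm : k < m := by
    by_contra hcon
    push Not at hcon
    nlinarith
  have hk2 : k ^ 2 ≤ Q := by nlinarith
  have hWm : m ^ 3 * W ≤ 24 * Q ^ 3 := by
    have h1 : 2 * m * W ≤ R * (7 * Q) := by rw [hW1]; gcongr; linarith
    have h2 : m * W ≤ 4 * (R * Q) := by linarith
    calc m ^ 3 * W = m ^ 2 * (m * W) := by ring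
      _ ≤ m ^ 2 * (4 * (R * Q)) := by gcongr
      _ = 4 * (m ^ 2 * R) * Q := by ring
      _ ≤ 4 * (6 * Q ^ 2) * Q := by gcongr
      _ = 24 * Q ^ 3 := by ring
  obtain ⟨V, hV⟩ : ∃ V, V = 32 * k * W - 3 * R ^ 2 := ⟨_, rfl⟩
  have hV1 : m * V = R * (96 * k ^ 3 + W) := by
    rw [hV]; linear_combination 16 * k * hW1 - R * hW
  have hVpos : 0 < V := by
    have h1 : 0 < m * V := by rw [hV1]; positivity
    exact pos_of_mul_pos_right h1 (by positivity)
  have hmV : m ≤ R * (96 * k ^ 3 + W) := by rw [← hV1]; nlinarith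
  have hmk3 : (m * k) ^ 3 ≤ Q ^ 3 := by gcongr
  calc m ^ 6 = m ^ 5 * m := by ring
    _ ≤ m ^ 5 * (R * (96 * k ^ 3 + W)) := by gcongr
    _ = (m ^ 2 * R) * (96 * (m * k) ^ 3 + m ^ 3 * W) := by ring
    _ ≤ (6 * Q ^ 2) * (96 * Q ^ 3 + 24 * Q ^ 3) := by gcongr
    _ = 720 * Q ^ 5 := by ring

/-- No solutions with `x + y < z + t` in the short range. -/
lemma quartic_no_sol (N x y z t : ℤ) (H : ℝ) (hN : 0 < N)
    (hx : N ≤ x) (hy : N ≤ y) (hz : N ≤ z) (ht : N ≤ t)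
    (hx' : (x : ℝ) ≤ N + H) (hy' : (y : ℝ) ≤ N + H)
    (hz' : (z : ℝ) ≤ N + H) (ht' : (t : ℝ) ≤ N + H)
    (hH : 4 ^ 10 * H ^ 10 = (N : ℝ) ^ 6)
    (h : x ^ 4 + y ^ 4 = z ^ 4 + t ^ 4) (hlt : x + y < z + t) : False := by
  have key := quartic_core (z + t + (x + y)) (z + t - (x + y))
    (4 * (x - y) ^ 2 - 4 * (z - t) ^ 2) (4 * (x - y) ^ 2 + 4 * (z - t) ^ 2)
    (by linarith) (by linarith) (by positivity) (by nlinarith [sq_nonneg (z - t)])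
    (by linear_combination (-128) * h)
  have rx : (N : ℝ) ≤ x := by exact_mod_cast hx
  have ry : (N : ℝ) ≤ y := by exact_mod_cast hy
  have rz : (N : ℝ) ≤ z := by exact_mod_cast hz
  have rt : (N : ℝ) ≤ t := by exact_mod_cast ht
  have rN : (0 : ℝ) < N := by exact_mod_cast hN
  have key' : ((z : ℝ) + t + (x + y)) ^ 6
      ≤ 720 * (4 * ((x : ℝ) - y) ^ 2 + 4 * ((z : ℝ) - t) ^ 2) ^ 5 := by exact_mod_cast key
  have h1 : ((x : ℝ) - y) ^ 2 ≤ H ^ 2 := sq_le_sq' (by linarith) (by linarith)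
  have h2 : ((z : ℝ) - t) ^ 2 ≤ H ^ 2 := sq_le_sq' (by linarith) (by linarith)
  have h3 : (4 * ((x : ℝ) - y) ^ 2 + 4 * ((z : ℝ) - t) ^ 2) ^ 5 ≤ (8 * H ^ 2) ^ 5 := by
    apply pow_le_pow_left₀ (by positivity); linarith
  have h4 : (4 * (N : ℝ)) ^ 6 ≤ ((z : ℝ) + t + (x + y)) ^ 6 := by
    apply pow_le_pow_left₀ (by positivity); linarith
  have h5 : (0 : ℝ) < (N : ℝ) ^ 6 := by positivity
  have h6 : (4 * (N : ℝ)) ^ 6 = 4096 * (N : ℝ) ^ 6 := by ring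
  have h7 : (8 * H ^ 2) ^ 5 = 32768 * H ^ 10 := by ring
  rw [h6] at h4
  rw [h7] at h3
  linarith

/-- There is an absolute constant `c > 0` such that for every positive integer `N`
the set `{n⁴ : N ≤ n, (n : ℝ) ≤ N + c·N^(3/5)}` is a Sidon set. -/
theorem quartics_sidon_N_three_fifths :
    ∃ c : ℝ, 0 < c ∧ ∀ N : ℕ, 0 < N →
      ∀ x y z t : ℕ, 0 < x → 0 < y → 0 < z → 0 < t →
        N ≤ x → N ≤ y → N ≤ z → N ≤ t →
        (x : ℝ) ≤ N + c * (N : ℝ) ^ ((3 : ℝ) / 5) →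
        (y : ℝ) ≤ N + c * (N : ℝ) ^ ((3 : ℝ) / 5) →
        (z : ℝ) ≤ N + c * (N : ℝ) ^ ((3 : ℝ) / 5) →
        (t : ℝ) ≤ N + c * (N : ℝ) ^ ((3 : ℝ) / 5) →
        x ^ 4 + y ^ 4 = z ^ 4 + t ^ 4 →
        ({x, y} : Finset ℕ) = {z, t} := by
  refine ⟨1 / 4, by norm_num, ?_⟩
  intro N hN x y z t hx0 hy0 hz0 ht0 hx hy hz ht hx' hy' hz' ht' h
  have hH : 4 ^ 10 * (1 / 4 * (N : ℝ) ^ ((3 : ℝ) / 5)) ^ 10 = (N : ℝ) ^ 6 := by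
    have h1 : ((N : ℝ) ^ ((3 : ℝ) / 5)) ^ 10 = (N : ℝ) ^ 6 := by
      rw [← Real.rpow_natCast, ← Real.rpow_mul (by positivity), ← Real.rpow_natCast]
      norm_num
    rw [mul_pow, h1]; ring
  have hi : (x : ℤ) ^ 4 + (y : ℤ) ^ 4 = (z : ℤ) ^ 4 + (t : ℤ) ^ 4 := by exact_mod_cast h
  have hs : x + y = z + t := by
    rcases lt_trichotomy (x + y) (z + t) with hl | hl | hl
    · exact (quartic_no_sol N x y z t _ (by exact_mod_cast hN) (by exact_mod_cast hx)
        (by exact_mod_cast hy) (by exact_mod_cast hz) (by exact_mod_cast ht)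
        (by exact_mod_cast hx') (by exact_mod_cast hy') (by exact_mod_cast hz')
        (by exact_mod_cast ht') (by exact_mod_cast hH) hi (by exact_mod_cast hl)).elim
    · exact hl
    · exact (quartic_no_sol N z t x y _ (by exact_mod_cast hN) (by exact_mod_cast hz)
        (by exact_mod_cast ht) (by exact_mod_cast hx) (by exact_mod_cast hy)
        (by exact_mod_cast hz') (by exact_mod_cast ht') (by exact_mod_cast hx')
        (by exact_mod_cast hy') (by exact_mod_cast hH) hi.symm (by exact_mod_cast hl)).elim
  have hsi : (y : ℤ) = z + t - x := by
    have : (x : ℤ) + y = z + t := by exact_mod_cast hs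
    linarith
  have hfac : ((x : ℤ) - z) * (x - t) *
      (6 * ((z : ℤ) + t) ^ 2 + (x - y) ^ 2 + (z - t) ^ 2) = 0 := by
    rw [hsi] at hi ⊢
    linear_combination 2 * hi
  have hpos : (0 : ℤ) < 6 * ((z : ℤ) + t) ^ 2 + (x - y) ^ 2 + (z - t) ^ 2 := by positivity
  rcases mul_eq_zero.mp hfac with h1 | h1
  · rcases mul_eq_zero.mp h1 with h2 | h2
    · have e1 : x = z := by omega
      have e2 : y = t := by omega
      rw [e1, e2]
    · have e1 : x = t := by omega
      have e2 : y = z := by omega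
      rw [e1, e2, Finset.pair_comm]
  · exact absurd h1 hpos.ne'
end

section
/- There is an absolute constant c > 0 such that for every positive integer N the set {n⁴ : n ∈ ℕ, N ≤ n and (n : ℝ) ≤ N + c·N^{12/13}} is not a Sidon set; equivalently, the equation x⁴ + y⁴ = z⁴ + t⁴ has a nontrivial solution in positive integers (one with {x, y} ≠ {z, t}) satisfying N ≤ x, y, z, t ≤ N + c·N^{12/13} (as reals). -/
def quartX (m : ℕ) : ℕ :=
  1584749 + 6665551 * m ^ 1 + 12996901 * m ^ 2 + 15564794 * m ^ 3 + 12778467 * m ^ 4 + 7596528 * m ^ 5 + 3364451 * m ^ 6 + 1123891 * m ^ 7 + 283092 * m ^ 8 + 53082 * m ^ 9 + 7198 * m ^ 10 + 668 * m ^ 11 + 38 * m ^ 12 + 1 * m ^ 13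

def quartY (m : ℕ) : ℕ :=
  2061283 + 8836276 * m ^ 1 + 17420555 * m ^ 2 + 20932547 * m ^ 3 + 17117799 * m ^ 4 + 10066998 * m ^ 5 + 4382731 * m ^ 6 + 1430662 * m ^ 7 + 350232 * m ^ 8 + 63504 * m ^ 9 + 8288 * m ^ 10 + 737 * m ^ 11 + 40 * m ^ 12 + 1 * m ^ 13

def quartZ (m : ℕ) : ℕ :=
  2219449 + 9457771 * m ^ 1 + 18560951 * m ^ 2 + 22211618 * m ^ 3 + 18084225 * m ^ 4 + 10580064 * m ^ 5 + 4577083 * m ^ 6 + 1483027 * m ^ 7 + 360048 * m ^ 8 + 64722 * m ^ 9 + 8378 * m ^ 10 + 740 * m ^ 11 + 40 * m ^ 12 + 1 * m ^ 13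

def quartT (m : ℕ) : ℕ :=
  555617 + 3016564 * m ^ 1 + 7146835 * m ^ 2 + 9966731 * m ^ 3 + 9225705 * m ^ 4 + 6026466 * m ^ 5 + 2871473 * m ^ 6 + 1013926 * m ^ 7 + 266016 * m ^ 8 + 51324 * m ^ 9 + 7090 * m ^ 10 + 665 * m ^ 11 + 38 * m ^ 12 + 1 * m ^ 13

theorem quart_identity (m : ℕ) :
    quartX m ^ 4 + quartY m ^ 4 = quartZ m ^ 4 + quartT m ^ 4 := by
  unfold quartX quartY quartZ quartT
  ring

theorem quartX_lower (m : ℕ) : m ^ 13 ≤ quartX m := by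
  unfold quartX
  omega

theorem quartX_upper (m : ℕ) : quartX m ≤ (m + 4) ^ 13 := by
  have h : (m + 4) ^ 13 = quartX m +
      (65524115 + 211438257 * m ^ 1 + 314158811 * m ^ 2 + 284327942 * m ^ 3 + 174654493 * m ^ 4 + 76748304 * m ^ 5 + 24750493 * m ^ 6 + 5904845 * m ^ 7 + 1034796 * m ^ 8 + 129958 * m ^ 9 + 11106 * m ^ 10 + 580 * m ^ 11 + 14 * m ^ 12) := by
    unfold quartX
    ring
  omega

theorem quartY_lower (m : ℕ) : m ^ 13 ≤ quartY m := by
  unfold quartY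
  omega

theorem quartY_upper (m : ℕ) : quartY m ≤ (m + 4) ^ 13 := by
  have h : (m + 4) ^ 13 = quartY m +
      (65047581 + 209267532 * m ^ 1 + 309735157 * m ^ 2 + 278960189 * m ^ 3 + 170315161 * m ^ 4 + 74277834 * m ^ 5 + 23732213 * m ^ 6 + 5598074 * m ^ 7 + 967656 * m ^ 8 + 119536 * m ^ 9 + 10016 * m ^ 10 + 511 * m ^ 11 + 12 * m ^ 12) := by
    unfold quartY
    ring
  omega

theorem quartZ_lower (m : ℕ) : m ^ 13 ≤ quartZ m := by
  unfold quartZ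
  omega

theorem quartZ_upper (m : ℕ) : quartZ m ≤ (m + 4) ^ 13 := by
  have h : (m + 4) ^ 13 = quartZ m +
      (64889415 + 208646037 * m ^ 1 + 308594761 * m ^ 2 + 277681118 * m ^ 3 + 169348735 * m ^ 4 + 73764768 * m ^ 5 + 23537861 * m ^ 6 + 5545709 * m ^ 7 + 957840 * m ^ 8 + 118318 * m ^ 9 + 9926 * m ^ 10 + 508 * m ^ 11 + 12 * m ^ 12) := by
    unfold quartZ
    ring
  omega

theorem quartT_lower (m : ℕ) : m ^ 13 ≤ quartT m := by
  unfold quartT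
  omega

theorem quartT_upper (m : ℕ) : quartT m ≤ (m + 4) ^ 13 := by
  have h : (m + 4) ^ 13 = quartT m +
      (66553247 + 215087244 * m ^ 1 + 320008877 * m ^ 2 + 289926005 * m ^ 3 + 178207255 * m ^ 4 + 78318366 * m ^ 5 + 25243471 * m ^ 6 + 6014810 * m ^ 7 + 1051872 * m ^ 8 + 131716 * m ^ 9 + 11214 * m ^ 10 + 583 * m ^ 11 + 14 * m ^ 12) := by
    unfold quartT
    ring
  omega

theorem quartT_lt_quartX (m : ℕ) : quartT m < quartX m := by
  unfold quartT quartX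
  omega

theorem quartX_lt_quartZ (m : ℕ) : quartX m < quartZ m := by
  unfold quartX quartZ
  omega

theorem quart_choose (N : ℕ) (hN : 0 < N) : ∃ k : ℕ, k ^ 13 < N ∧ N ≤ (k + 1) ^ 13 := by
  have hex : ∃ k : ℕ, N ≤ (k + 1) ^ 13 :=
    ⟨N, (Nat.le_succ N).trans (Nat.le_self_pow (by norm_num) _)⟩
  classical
  refine ⟨Nat.find hex, ?_, Nat.find_spec hex⟩
  rcases h : Nat.find hex with _ | j
  · simpa using hN
  · have := Nat.find_min hex (m := j) (by omega)
    omega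

theorem quart_bound (N k w : ℕ) (hN : 0 < N) (hk : k ^ 13 < N) (hw : w ≤ (k + 1 + 4) ^ 13) :
    (w : ℝ) ≤ N + (13 * 5 * 6 ^ 12 : ℝ) * (N : ℝ) ^ ((12 : ℝ) / 13) := by
  set r : ℝ := (N : ℝ) ^ ((1 : ℝ) / 13) with hr
  have hN1 : (1 : ℝ) ≤ N := by exact_mod_cast hN
  have hr1 : 1 ≤ r := Real.one_le_rpow hN1 (by norm_num)
  have hr13 : r ^ 13 = N := by
    rw [hr, ← Real.rpow_natCast, ← Real.rpow_mul (by positivity)]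
    norm_num
  have hr12 : (N : ℝ) ^ ((12 : ℝ) / 13) = r ^ 12 := by
    rw [hr, ← Real.rpow_natCast, ← Real.rpow_mul (by positivity)]
    norm_num
  have hkr : (k : ℝ) ≤ r := by
    have h : (k : ℝ) ^ 13 ≤ r ^ 13 := by
      rw [hr13]
      exact_mod_cast hk.le
    exact le_of_pow_le_pow_left₀ (by norm_num) (by positivity) h
  have hw' : (w : ℝ) ≤ ((k : ℝ) + 5) ^ 13 := by
    have h : (w : ℝ) ≤ ((k : ℝ) + 1 + 4) ^ 13 := by exact_mod_cast hw
    calc (w : ℝ) ≤ ((k : ℝ) + 1 + 4) ^ 13 := h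
      _ = _ := by ring
  have h2 : ((k : ℝ) + 5) ^ 13 ≤ (r + 5) ^ 13 := by gcongr
  have h3 : (r + 5) ^ 13 ≤ r ^ 13 + 13 * 5 * (r + 5) ^ 12 := by
    have hb := one_add_mul_le_pow (a := -(5 / (r + 5))) (by
      have : (5 : ℝ) / (r + 5) ≤ 1 := by
        rw [div_le_one (by positivity)]
        linarith
      linarith) 13
    have hpos : 0 < r + 5 := by positivity
    have he : 1 + -(5 / (r + 5)) = r / (r + 5) := by
      field_simp
      ring
    rw [he, div_pow, le_div_iff₀ (by positivity)] at hb
    have e2 : (1 + ((13 : ℕ) : ℝ) * -(5 / (r + 5))) * (r + 5) ^ 13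
        = (r + 5) ^ 13 - 13 * 5 * (r + 5) ^ 12 := by
      push_cast
      field_simp
      ring
    rw [e2] at hb
    linarith
  have h4 : (r + 5) ^ 12 ≤ 6 ^ 12 * r ^ 12 := by
    rw [← mul_pow]
    gcongr
    linarith
  rw [hr12]
  nlinarith [h4]

/-- There is an absolute constant `c > 0` such that for every positive integer `N`
the equation `x⁴ + y⁴ = z⁴ + t⁴` has a nontrivial solution with
`N ≤ x, y, z, t ≤ N + c·N^(12/13)`. -/
theorem quartics_not_sidon_N_twelve_thirteenths :
    ∃ c : ℝ, 0 < c ∧ ∀ N : ℕ, 0 < N →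
      ∃ x y z t : ℕ, 0 < x ∧ 0 < y ∧ 0 < z ∧ 0 < t ∧
        N ≤ x ∧ N ≤ y ∧ N ≤ z ∧ N ≤ t ∧
        (x : ℝ) ≤ N + c * (N : ℝ) ^ ((12 : ℝ) / 13) ∧
        (y : ℝ) ≤ N + c * (N : ℝ) ^ ((12 : ℝ) / 13) ∧
        (z : ℝ) ≤ N + c * (N : ℝ) ^ ((12 : ℝ) / 13) ∧
        (t : ℝ) ≤ N + c * (N : ℝ) ^ ((12 : ℝ) / 13) ∧
        x ^ 4 + y ^ 4 = z ^ 4 + t ^ 4 ∧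
        ({x, y} : Finset ℕ) ≠ {z, t} := by
  obtain hch := quart_choose
  refine ⟨13 * 5 * 6 ^ 12, by norm_num, fun N hN => ?_⟩
  obtain ⟨k, hk, hk1⟩ := hch N hN
  have lx := hk1.trans (quartX_lower (k + 1))
  have ly := hk1.trans (quartY_lower (k + 1))
  have lz := hk1.trans (quartZ_lower (k + 1))
  have lt := hk1.trans (quartT_lower (k + 1))
  refine ⟨quartX (k + 1), quartY (k + 1), quartZ (k + 1), quartT (k + 1),
    by omega, by omega, by omega, by omega, lx, ly, lz, lt,
    quart_bound N k _ hN hk (quartX_upper _), quart_bound N k _ hN hk (quartY_upper _),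
    quart_bound N k _ hN hk (quartZ_upper _), quart_bound N k _ hN hk (quartT_upper _),
    quart_identity _, ?_⟩
  intro h
  have hx : quartX (k + 1) ∈ ({quartZ (k + 1), quartT (k + 1)} : Finset ℕ) := by
    rw [← h]
    simp
  have h1 := quartT_lt_quartX (k + 1)
  have h2 := quartX_lt_quartZ (k + 1)
  simp only [Finset.mem_insert, Finset.mem_singleton] at hx
  omega
end

section
/- The generalized Pell equation D² − 19·B² = 254 has infinitely many solutions in positive integers D, B; more precisely, for every positive integer B₀ there exist positive integers D, B with B > B₀ and D² − 19·B² = 254. -/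
/-- The generalized Pell equation `D² − 19B² = 254` has infinitely many solutions
in positive integers `D`, `B`. -/
theorem pell_D2_19B2_254_infinitely_many_solutions :
    ∀ B₀ : ℕ, 0 < B₀ → ∃ D B : ℕ, 0 < D ∧ B₀ < B ∧
      (D : ℤ) ^ 2 - 19 * (B : ℤ) ^ 2 = 254 := by
  suffices H : ∀ B₀ : ℕ, ∃ D B : ℕ, 0 < D ∧ B₀ < B ∧
      (D : ℤ) ^ 2 - 19 * (B : ℤ) ^ 2 = 254 from fun B₀ _ => H B₀
  intro B₀
  induction B₀ with
  | zero => exact ⟨27, 5, by norm_num, by norm_num, by norm_num⟩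
  | succ n ih =>
    obtain ⟨D, B, hD, hB, h⟩ := ih
    refine ⟨170 * D + 741 * B, 39 * D + 170 * B, by omega, by omega, ?_⟩
    push_cast
    linear_combination h
end

section
/- Let D and B be odd positive integers satisfying D² − 19·B² = 254. Then the positive integers x = (3B² + B + 42)/2, y = (3B² − B + 42)/2, z = (3B² + 36 + D)/2, t = (3B² + 36 − D)/2 are well defined (all four numerators are even and positive) and satisfy x³ + y³ = z³ + t³. -/
/-- If `D` and `B` are odd positive integers with `D² − 19B² = 254`, then the
quadruple `x = (3B²+B+42)/2`, `y = (3B²−B+42)/2`, `z = (3B²+36+D)/2`,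
`t = (3B²+36−D)/2` consists of well-defined positive integers (the divisions
by 2 are exact) and satisfies `x³ + y³ = z³ + t³`. -/
theorem cubes_quadruple_from_pell (D B : ℕ) (hD : 0 < D) (hB : 0 < B)
    (hDodd : Odd D) (hBodd : Odd B)
    (hPell : (D : ℤ) ^ 2 - 19 * (B : ℤ) ^ 2 = 254) :
    ∃ x y z t : ℕ, 0 < x ∧ 0 < y ∧ 0 < z ∧ 0 < t ∧
      2 * x = 3 * B ^ 2 + B + 42 ∧
      2 * y + B = 3 * B ^ 2 + 42 ∧
      2 * z = 3 * B ^ 2 + 36 + D ∧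
      2 * t + D = 3 * B ^ 2 + 36 ∧
      x ^ 3 + y ^ 3 = z ^ 3 + t ^ 3 := by
  obtain ⟨d, rfl⟩ := hDodd
  obtain ⟨b, rfl⟩ := hBodd
  have hle : d < 6 * b ^ 2 + 6 * b + 19 := by
    by_contra hcon
    push Not at hcon
    zify at hcon
    push_cast at hPell
    have hb : (0 : ℤ) ≤ b := Int.natCast_nonneg b
    have hd : (0 : ℤ) ≤ d := Int.natCast_nonneg d
    nlinarith [mul_self_le_mul_self (by positivity) hcon, pow_nonneg hb 2, pow_nonneg hb 3,
      pow_nonneg hb 4]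
  obtain ⟨t, ht⟩ := Nat.exists_eq_add_of_lt hle
  refine ⟨6 * b ^ 2 + 7 * b + 23, 6 * b ^ 2 + 5 * b + 22, 6 * b ^ 2 + 6 * b + 20 + d, t + 1,
    by positivity, by positivity, by positivity, by positivity, by ring, by ring, by ring,
    by linarith, ?_⟩
  zify at ht ⊢
  have ht' : (t : ℤ) + 1 = 6 * b ^ 2 + 6 * b + 19 - d := by linarith
  rw [ht']
  push_cast at hPell
  apply mul_left_cancel₀ (show (4 : ℤ) ≠ 0 by norm_num)
  linear_combination (-(3 * (12 * (b : ℤ) ^ 2 + 12 * b + 39))) * hPell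
end

section
/- For all real numbers x ≥ y > 0 one has x + y ≤ (4(x³ + y³))^{1/3} ≤ x + y + (x − y)²/(x + y); equivalently, writing d = (4(x³ + y³))^{1/3} − (x + y), one has 0 ≤ d ≤ (x − y)²/(x + y). -/
/-- For all reals `x ≥ y > 0` one has
`x + y ≤ (4(x³+y³))^(1/3) ≤ x + y + (x−y)²/(x+y)`. -/
theorem cube_root_sum_bounds (x y : ℝ) (hy : 0 < y) (hxy : y ≤ x) :
    x + y ≤ (4 * (x ^ 3 + y ^ 3)) ^ ((1 : ℝ) / 3) ∧
    (4 * (x ^ 3 + y ^ 3)) ^ ((1 : ℝ) / 3) ≤ x + y + (x - y) ^ 2 / (x + y) := by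
  have hx : 0 < x := lt_of_lt_of_le hy hxy
  have hs : 0 < x + y := by positivity
  have key : ∀ a : ℝ, 0 ≤ a → (a ^ 3) ^ ((1 : ℝ) / 3) = a := by
    intro a ha
    rw [← Real.rpow_natCast, ← Real.rpow_mul ha]
    norm_num
  have hid : 4 * (x ^ 3 + y ^ 3) = (x + y) ^ 3 + 3 * (x + y) * (x - y) ^ 2 := by ring
  constructor
  · calc x + y = ((x + y) ^ 3) ^ ((1 : ℝ) / 3) := (key _ hs.le).symm
      _ ≤ _ := by
        apply Real.rpow_le_rpow (by positivity) _ (by norm_num)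
        rw [hid]
        have : 0 ≤ 3 * (x + y) * (x - y) ^ 2 := by positivity
        linarith
  · have ht : 0 ≤ (x - y) ^ 2 / (x + y) := by positivity
    have hts : (x - y) ^ 2 = (x - y) ^ 2 / (x + y) * (x + y) := by field_simp
    generalize (x - y) ^ 2 / (x + y) = t at ht hts ⊢
    calc _ ≤ ((x + y + t) ^ 3) ^ ((1 : ℝ) / 3) := by
          apply Real.rpow_le_rpow (by positivity) _ (by norm_num)
          rw [hid, hts]
          have : 0 ≤ 3 * (x + y) * t ^ 2 + t ^ 3 := by positivity
          linarith [this, show (x + y + t) ^ 3 = (x + y) ^ 3 + 3 * (x + y) * (t * (x + y))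
            + (3 * (x + y) * t ^ 2 + t ^ 3) by ring]
      _ = _ := key _ (by positivity)
end
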